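/- arXiv:1811.03827 — 4 statements merged into one kernel-verified Lean document; each statement's English description precedes it below -/
import Mathlib

section
/- Let m ∈ ℕ and let μ₁,…,μ_m be finite Borel measures on ℝ satisfying μ₁(ℝ) = ⋯ = μ_m(ℝ) and ∫|x| dμ_l < ∞ for l = 1,…,m, and assume ((F_i−F_j)*(F_i−F_j))(x) ≥ 0 for all i,j and all x ∈ ℝ, where F_i is the distribution function of μ_i. If p ≺ q (q majorizes p) are m-tuples of non-negative integers, then W^p(μ₁,…,μ_m) ≼_cx W^q(μ₁,…,μ_m). -/
open MeasureTheory Set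

noncomputable def distFun (μ : Measure ℝ) (x : ℝ) : ℝ := (μ (Set.Iic x)).toReal

/-- Convolution of two real functions with respect to Lebesgue measure. -/
noncomputable def fconv (h₁ h₂ : ℝ → ℝ) (A : ℝ) : ℝ := ∫ t, h₁ t * h₂ (A - t)

/-- Convex order for finite Borel measures on ℝ. -/
def ConvexOrder (μ ν : Measure ℝ) : Prop :=
  ∀ φ : ℝ → ℝ, ConvexOn ℝ Set.univ φ → Integrable φ μ → Integrable φ ν →
    ∫ x, φ x ∂μ ≤ ∫ x, φ x ∂ν

/-- Usual stochastic order: `μ ≤ₛₜ ν`. -/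
def StochOrder (μ ν : Measure ℝ) : Prop :=
  μ Set.univ = ν Set.univ ∧ ∀ x : ℝ, distFun ν x ≤ distFun μ x

/-- k-fold convolution power of a measure. -/
noncomputable def convPow (μ : Measure ℝ) : ℕ → Measure ℝ
  | 0 => Measure.dirac 0
  | n + 1 => Measure.conv (convPow μ n) μ

/-- Convolution of a list of measures. -/
noncomputable def convList : List (Measure ℝ) → Measure ℝ
  | [] => Measure.dirac 0
  | m :: l => Measure.conv m (convList l)

/-- Convolution polynomial of measures associated with a multivariate polynomial
with non-negative coefficients. -/
noncomputable def convPoly {m : ℕ} (P : MvPolynomial (Fin m) ℝ) (μ : Fin m → Measure ℝ) :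
    Measure ℝ :=
  ∑ d ∈ P.support,
    ENNReal.ofReal (MvPolynomial.coeff d P) • convList (List.ofFn fun i => convPow (μ i) (d i))
/-- The nonincreasing rearrangement of an m-tuple of naturals. -/
def sortDesc {m : ℕ} (p : Fin m → ℕ) : Fin m → ℕ := fun i => p (Tuple.sort p i.rev)

/-- `Majorizes p q` means `p ≺ q`, i.e. `q` majorizes `p`. -/
def Majorizes {m : ℕ} (p q : Fin m → ℕ) : Prop :=
  (∑ l, sortDesc p l) = (∑ l, sortDesc q l) ∧
    ∀ k : Fin m, ∑ l ∈ Finset.Iic k, sortDesc p l ≤ ∑ l ∈ Finset.Iic k, sortDesc q l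

/-- Condition (S) for a pair `p ≺ q`. -/
def CondS {m : ℕ} (p q : Fin m → ℕ) : Prop :=
  ∃ l₁ l₂ : Fin m, l₁ < l₂ ∧ sortDesc q l₁ = sortDesc p l₁ + 1 ∧
    sortDesc q l₂ + 1 = sortDesc p l₂ ∧
    ∀ l, l ≠ l₁ → l ≠ l₂ → sortDesc q l = sortDesc p l

/-- The symmetrized monomial `W^p(x₁,…,x_m) = (1/m!) Σ_π Π_l x_{π(l)}^{p_l}`. -/
noncomputable def Wpoly {m : ℕ} (p : Fin m → ℕ) (x : Fin m → ℝ) : ℝ :=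
  ((m.factorial : ℝ))⁻¹ * ∑ π : Equiv.Perm (Fin m), ∏ l, x (π l) ^ p l

/-- The convolution polynomial of measures corresponding to `W^p`. -/
noncomputable def Wmeas {m : ℕ} (p : Fin m → ℕ) (μ : Fin m → Measure ℝ) : Measure ℝ :=
  ((m.factorial : ENNReal))⁻¹ •
    ∑ π : Equiv.Perm (Fin m), convList (List.ofFn fun l => convPow (μ (π l)) (p l))

/-!
Taylor's formula writes a convex function as an affine function plus a positive superposition of
hinges, so among measures of equal mass and mean the convex order is the pointwise order of the
stop-loss transforms `∫ (x - a)⁺`. By Fubini, the stop-loss transform of `μ ∗ ν` is the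
convolution of the tails of `μ` and `ν`; hence the hypothesis on distribution functions says that
the stop-loss functional is nonnegative on `(μ_i - μ_j) ^ 2` in the convolution algebra, and it
stays nonnegative after convolving with a further measure.

Muirhead's argument needs nothing else: `q` is brought to `p` by unit transfers from a larger to a
smaller entry, and each transfer lowers the symmetrized monomial by a sum of terms `c (a - b) ^ 2`.
For the mass and the mean these terms vanish when all masses agree, so mass and mean are preserved.
-/

section Transfer

variable {ι : Type*} [DecidableEq ι]

/-- The Robin Hood transfer of one unit from the `i`-th to the `j`-th entry of a tuple; meant for
`i ≠ j` and `q i ≠ 0`, since the subtraction is truncated. -/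
def transfer (q : ι → ℕ) (i j : ι) : ι → ℕ :=
  Function.update (Function.update q i (q i - 1)) j (q j + 1)

/-- `p` arises from `q` by a Robin Hood transfer that does not overshoot: the donor exceeds the
recipient by at least `2`. -/
def RobinHood (q p : ι → ℕ) : Prop :=
  ∃ i j, q j + 2 ≤ q i ∧ p = transfer q i j

lemma transfer_apply_left (q : ι → ℕ) {i j : ι} (hij : i ≠ j) : transfer q i j i = q i - 1 := by
  simp [transfer, hij]

lemma transfer_apply_right (q : ι → ℕ) (i j : ι) : transfer q i j j = q j + 1 := by
  simp [transfer]

lemma transfer_apply_of_ne (q : ι → ℕ) {i j l : ι} (hi : l ≠ i) (hj : l ≠ j) :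
    transfer q i j l = q l := by
  simp [transfer, hi, hj]

lemma sum_transfer (s : Finset ι) {q : ι → ℕ} {i j : ι} (hij : i ≠ j) (hi : q i ≠ 0) :
    ∑ l ∈ s, transfer q i j l + (if i ∈ s then 1 else 0)
      = ∑ l ∈ s, q l + (if j ∈ s then 1 else 0) := by
  rw [← Finset.sum_ite_eq' s i fun _ => 1, ← Finset.sum_ite_eq' s j fun _ => 1,
    ← Finset.sum_add_distrib, ← Finset.sum_add_distrib]
  refine Finset.sum_congr rfl fun l _ => ?_
  rcases eq_or_ne l i with rfl | hli
  · simp only [transfer_apply_left q hij, if_pos, if_neg hij]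
    omega
  rcases eq_or_ne l j with rfl | hlj
  · simp [transfer_apply_right, hli]
  · simp [transfer_apply_of_ne q hli hlj, hli, hlj]

lemma sum_transfer_sub_lt [Fintype ι] {p q : ι → ℕ} {i j : ι} (hi : p i < q i) (hj : q j < p j) :
    ∑ l, (transfer q i j l - p l) < ∑ l, (q l - p l) := by
  have hij : i ≠ j := by rintro rfl; omega
  refine Finset.sum_lt_sum (fun l _ => ?_) ⟨i, Finset.mem_univ i, ?_⟩
  · rcases eq_or_ne l i with rfl | hli
    · rw [transfer_apply_left q hij]
      omega
    rcases eq_or_ne l j with rfl | hlj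
    · rw [transfer_apply_right]
      omega
    · rw [transfer_apply_of_ne q hli hlj]
  · rw [transfer_apply_left q hij]
    omega

end Transfer

section Majorization

variable {ι : Type*} [LinearOrder ι]

lemma exists_deficit_of_sum_eq [Fintype ι] {p q : ι → ℕ} (hsum : ∑ l, p l = ∑ l, q l)
    (hne : q ≠ p) : ∃ k, q k < p k ∧ ∀ l < k, p l ≤ q l := by
  have hex : ∃ k, q k < p k := by
    by_contra! hle
    exact hne (funext fun l =>
      ((Finset.sum_eq_sum_iff_of_le fun l _ => hle l).1 hsum l (Finset.mem_univ l)).symm)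
  obtain ⟨k, hk, hmin⟩ := WellFounded.has_min (wellFounded_lt (α := ι)) {k | q k < p k} hex
  exact ⟨k, hk, fun l hl => not_lt.1 fun h => hmin l h hl⟩

variable [LocallyFiniteOrderBot ι]

lemma exists_surplus_of_sum_Iic_le {p q : ι → ℕ} {k : ι} (hk : q k < p k)
    (hle : ∑ l ∈ Finset.Iic k, p l ≤ ∑ l ∈ Finset.Iic k, q l) : ∃ i < k, p i < q i := by
  by_contra! h
  refine hle.not_gt (Finset.sum_lt_sum (fun l hl => ?_) ⟨k, Finset.mem_Iic.2 le_rfl, hk⟩)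
  rcases (Finset.mem_Iic.1 hl).lt_or_eq with hlk | rfl
  · exact h l hlk
  · exact hk.le

lemma sum_Iic_le_sum_Iic_transfer {p q : ι → ℕ} {i k : ι} (hik : i < k) (hi : p i < q i)
    (hk : ∀ l < k, p l ≤ q l) (hle : ∀ n, ∑ l ∈ Finset.Iic n, p l ≤ ∑ l ∈ Finset.Iic n, q l)
    (n : ι) : ∑ l ∈ Finset.Iic n, p l ≤ ∑ l ∈ Finset.Iic n, transfer q i k l := by
  have htransfer := sum_transfer (Finset.Iic n) hik.ne (Nat.ne_zero_of_lt hi)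
  simp only [Finset.mem_Iic] at htransfer
  by_cases hmid : i ≤ n ∧ n < k
  · have hlt : ∑ l ∈ Finset.Iic n, p l < ∑ l ∈ Finset.Iic n, q l :=
      Finset.sum_lt_sum (fun l hl => hk l ((Finset.mem_Iic.1 hl).trans_lt hmid.2))
        ⟨i, Finset.mem_Iic.2 hmid.1, hi⟩
    rw [if_pos hmid.1, if_neg hmid.2.not_ge] at htransfer
    omega
  · have := hle n
    have hiff : i ≤ n ↔ k ≤ n :=
      ⟨fun hin => not_lt.1 fun hnk => hmid ⟨hin, hnk⟩, hik.le.trans⟩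
    simp only [hiff] at htransfer
    omega

/-- Only the smaller tuple has to be sorted: the donor `i` precedes the first
deficit `k`, so `q k < p k ≤ p i < q i`. -/
lemma reflTransGen_robinHood [Fintype ι] {p : ι → ℕ} (hp : Antitone p) {q : ι → ℕ}
    (hsum : ∑ l, p l = ∑ l, q l)
    (hle : ∀ n, ∑ l ∈ Finset.Iic n, p l ≤ ∑ l ∈ Finset.Iic n, q l) :
    Relation.ReflTransGen RobinHood q p := by
  induction hN : ∑ l, (q l - p l) using Nat.strong_induction_on generalizing q with
  | _ N ih =>
  by_cases hqp : q = p
  · rw [hqp]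
  obtain ⟨k, hk, hbefore⟩ := exists_deficit_of_sum_eq hsum hqp
  obtain ⟨i, hik, hi⟩ := exists_surplus_of_sum_Iic_le hk (hle k)
  have hstep : RobinHood q (transfer q i k) := ⟨i, k, by have := hp hik.le; omega, rfl⟩
  refine .head hstep (ih _ (hN ▸ sum_transfer_sub_lt hi hk) ?_
    (sum_Iic_le_sum_Iic_transfer hik hi hbefore hle) rfl)
  have := sum_transfer Finset.univ hik.ne (Nat.ne_zero_of_lt hi)
  simp only [Finset.mem_univ, if_true] at this
  omega

end Majorization

section SymmetricSum

variable {M R ι : Type*} [CommMonoid M] [AddCommMonoid R] [Fintype ι] [DecidableEq ι]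

/-- The sum `∑_π f (∏_l x_{π(l)} ^ p_l)`: the value at `W^p(x)`, up to the factor `1 / n!`, of the
linear extension of `f` to the monoid algebra. -/
def symSum (f : M → R) (x : ι → M) (p : ι → ℕ) : R :=
  ∑ π : Equiv.Perm ι, f (∏ l, x (π l) ^ p l)

lemma symSum_comp_perm (f : M → R) (x : ι → M) (p : ι → ℕ) (σ : Equiv.Perm ι) :
    symSum f x (p ∘ σ) = symSum f x p := by
  unfold symSum
  rw [← Equiv.sum_comp (Equiv.mulRight σ)]
  refine Finset.sum_congr rfl fun π _ => ?_
  rw [← Equiv.prod_comp σ fun l => x (π l) ^ p l]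
  rfl

lemma symSum_add_self (f : M → R) (x : ι → M) (p : ι → ℕ) (σ : Equiv.Perm ι) :
    symSum f x p + symSum f x p = ∑ π : Equiv.Perm ι,
      (f (∏ l, (x ∘ π) l ^ p l) + f (∏ l, (x ∘ π) (σ l) ^ p l)) := by
  rw [Finset.sum_add_distrib]
  congr 1
  exact (Equiv.sum_comp (Equiv.mulRight σ) fun π => f (∏ l, x (π l) ^ p l)).symm

lemma prod_eq_mul_mul_prod_compl (g : ι → M) {i j : ι} (hij : i ≠ j) :
    ∏ l, g l = g i * g j * ∏ l ∈ {i, j}ᶜ, g l := by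
  rw [← Finset.prod_pair hij, Finset.prod_mul_prod_compl]

end SymmetricSum

section Muirhead

variable {M R : Type*} [CommMonoid M] [CommRing R] [LinearOrder R]

/-- The linear extension of `f` to the monoid algebra is nonnegative at every `c * (a - b) ^ 2`
with `c` in the monoid. -/
def NonnegOnSqSub (f : M → R) (a b : M) : Prop :=
  ∀ c, 2 * f (c * (a * b)) ≤ f (c * (a * a)) + f (c * (b * b))

variable [IsStrictOrderedRing R]

lemma add_le_add_of_two_mul_le {g : ℕ → R} {n : ℕ}
    (hg : ∀ k ≤ n, 2 * g (k + 1) ≤ g k + g (k + 2)) : g 1 + g (n + 1) ≤ g 0 + g (n + 2) := by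
  induction n with
  | zero => linarith [hg 0 le_rfl]
  | succ n ih => linarith [ih fun k hk => hg k (hk.trans n.le_succ), hg (n + 1) le_rfl]

lemma NonnegOnSqSub.add_le_add {f : M → R} {a b : M} (h : NonnegOnSqSub f a b) (n : ℕ) (c : M) :
    f (c * (a ^ (n + 1) * b)) + f (c * (a * b ^ (n + 1)))
      ≤ f (c * a ^ (n + 2)) + f (c * b ^ (n + 2)) := by
  have hconvex : ∀ k ≤ n, 2 * f (c * (a ^ (k + 1) * b ^ (n + 2 - (k + 1))))
      ≤ f (c * (a ^ k * b ^ (n + 2 - k))) + f (c * (a ^ (k + 2) * b ^ (n + 2 - (k + 2)))) := by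
    intro k hk
    obtain ⟨r, rfl⟩ := Nat.exists_eq_add_of_le hk
    rw [show k + r + 2 - (k + 1) = r + 1 by omega, show k + r + 2 - k = r + 2 by omega,
      show k + r + 2 - (k + 2) = r by omega, add_comm (f _)]
    convert h (c * (a ^ k * b ^ r)) using 3 <;> simp only [pow_succ] <;> ac_rfl
  simpa [add_comm, show n + 2 - (n + 1) = 1 by omega] using
    add_le_add_of_two_mul_le (g := fun k => f (c * (a ^ k * b ^ (n + 2 - k)))) hconvex

variable {ι : Type*} [Fintype ι] [DecidableEq ι]

lemma NonnegOnSqSub.prod_transfer_add_le {f : M → R} {y : ι → M} {q : ι → ℕ} {i j : ι}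
    (h : NonnegOnSqSub f (y i) (y j)) (hq : q j + 2 ≤ q i) :
    f (∏ l, y l ^ transfer q i j l) + f (∏ l, y (Equiv.swap i j l) ^ transfer q i j l)
      ≤ f (∏ l, y l ^ q l) + f (∏ l, y (Equiv.swap i j l) ^ q l) := by
  have hij : i ≠ j := by rintro rfl; omega
  obtain ⟨n, hn⟩ := Nat.exists_eq_add_of_le hq
  have hsplit : ∀ z : ι → M, (∀ l ∈ ({i, j} : Finset ι)ᶜ, z l = y l) → ∀ r : ι → ℕ,
      (∀ l ∈ ({i, j} : Finset ι)ᶜ, r l = q l) →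
      ∏ l, z l ^ r l = z i ^ r i * z j ^ r j * ∏ l ∈ {i, j}ᶜ, y l ^ q l := by
    intro z hz r hr
    rw [prod_eq_mul_mul_prod_compl _ hij]
    congr 1
    exact Finset.prod_congr rfl fun l hl => by rw [hz l hl, hr l hl]
  have hswap : ∀ l ∈ ({i, j} : Finset ι)ᶜ, y (Equiv.swap i j l) = y l := by
    simp +contextual [Equiv.swap_apply_of_ne_of_ne]
  have htransfer : ∀ l ∈ ({i, j} : Finset ι)ᶜ, transfer q i j l = q l := by
    simp +contextual [transfer_apply_of_ne]
  rw [hsplit y (fun _ _ => rfl) _ htransfer, hsplit _ hswap _ htransfer,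
    hsplit y (fun _ _ => rfl) q fun _ _ => rfl, hsplit _ hswap q fun _ _ => rfl,
    transfer_apply_left q hij, transfer_apply_right, Equiv.swap_apply_left,
    Equiv.swap_apply_right, hn, show q j + 2 + n - 1 = q j + (n + 1) by omega]
  convert h.add_le_add n ((y i * y j) ^ q j * ∏ l ∈ {i, j}ᶜ, y l ^ q l) using 3 <;>
    simp only [mul_pow, pow_add, pow_one, pow_two] <;> ac_rfl

lemma symSum_le_of_robinHood {f : M → R} {x : ι → M}
    (hf : ∀ i j, NonnegOnSqSub f (x i) (x j)) {p q : ι → ℕ} (hqp : RobinHood q p) :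
    symSum f x p ≤ symSum f x q := by
  obtain ⟨i, j, hq, rfl⟩ := hqp
  have hdouble : symSum f x (transfer q i j) + symSum f x (transfer q i j)
      ≤ symSum f x q + symSum f x q := by
    rw [symSum_add_self f x _ (Equiv.swap i j), symSum_add_self f x _ (Equiv.swap i j)]
    exact Finset.sum_le_sum fun π _ => (hf (π i) (π j)).prod_transfer_add_le (y := x ∘ π) hq
  linarith

lemma symSum_le_of_reflTransGen {f : M → R} {x : ι → M}
    (hf : ∀ i j, NonnegOnSqSub f (x i) (x j)) {p q : ι → ℕ}
    (hqp : Relation.ReflTransGen RobinHood q p) : symSum f x p ≤ symSum f x q := by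
  induction hqp with
  | refl => rfl
  | tail _ hstep ih => exact (symSum_le_of_robinHood hf hstep).trans ih

end Muirhead

section Majorizes

lemma antitone_sortDesc {m : ℕ} (p : Fin m → ℕ) : Antitone (sortDesc p) := fun _ _ hab =>
  Tuple.monotone_sort p (Fin.rev_le_rev.2 hab)

lemma symSum_sortDesc {M R : Type*} [CommMonoid M] [AddCommMonoid R] {m : ℕ} (f : M → R)
    (x : Fin m → M) (p : Fin m → ℕ) :
    symSum f x (sortDesc p) = symSum f x p :=
  symSum_comp_perm f x p (Fin.revPerm.trans (Tuple.sort p))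

variable {M R : Type*} [CommMonoid M] [CommRing R] [LinearOrder R] [IsStrictOrderedRing R] {m : ℕ}

theorem symSum_le_of_majorizes {f : M → R} {x : Fin m → M}
    (hf : ∀ i j, NonnegOnSqSub f (x i) (x j)) {p q : Fin m → ℕ} (hpq : Majorizes p q) :
    symSum f x p ≤ symSum f x q := by
  rw [← symSum_sortDesc f x p, ← symSum_sortDesc f x q]
  exact symSum_le_of_reflTransGen hf
    (reflTransGen_robinHood (antitone_sortDesc p) hpq.1 hpq.2)

lemma symSum_eq_of_majorizes {f : M → R} {x : Fin m → M}
    (hf : ∀ i j c, 2 * f (c * (x i * x j)) = f (c * (x i * x i)) + f (c * (x j * x j)))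
    {p q : Fin m → ℕ} (hpq : Majorizes p q) : symSum f x p = symSum f x q := by
  refine le_antisymm (symSum_le_of_majorizes (fun i j c => (hf i j c).le) hpq) ?_
  have hneg := symSum_le_of_majorizes (f := fun a => -f a) (x := x)
    (fun i j c => by linarith [hf i j c]) hpq
  simpa [symSum] using hneg

end Majorizes

section ConvexTaylor

open scoped Interval

/-- The second-order remainder kernel: `max (x - a) 0` expanded at `c`, that is, with its tangent
line at `c` subtracted. -/
noncomputable def hingeRemainder (c a x : ℝ) : ℝ := if c < a then max (x - a) 0 else max (a - x) 0

lemma measurable_uncurry_hingeRemainder (c : ℝ) :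
    Measurable (Function.uncurry (hingeRemainder c)) :=
  Measurable.ite (measurableSet_lt (by fun_prop) (by fun_prop)) (by fun_prop) (by fun_prop)

lemma exists_stieltjesFunction_integral_eq_sub {φ : ℝ → ℝ} (hφ : ConvexOn ℝ univ φ) :
    ∃ S : StieltjesFunction ℝ, ∀ a b, ∫ u in a..b, S u = φ b - φ a := by
  have hmono : Monotone fun x => derivWithin φ (Ioi x) x := by
    simpa [monotoneOn_univ] using hφ.monotoneOn_rightDeriv
  have hcont : Continuous φ := by simpa [continuousOn_univ] using hφ.continuousOn_interior
  refine ⟨hmono.stieltjesFunction, fun a b => ?_⟩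
  rw [← intervalIntegral.integral_eq_sub_of_hasDeriv_right hcont.continuousOn
    (fun x _ => hφ.hasDerivWithinAt_rightDeriv_of_mem_interior (by simp)) hmono.intervalIntegrable]
  refine intervalIntegral.integral_congr_ae ?_
  filter_upwards [hmono.countable_not_continuousAt.ae_notMem volume] with x hx _
  rw [hmono.stieltjesFunction_eq]
  exact hmono.continuousWithinAt_Ioi_iff_rightLim_eq.1 (not_not.1 hx).continuousWithinAt

lemma measure_uIoc_eq_enorm (S : StieltjesFunction ℝ) (a b : ℝ) :
    S.measure (Ι a b) = ‖S b - S a‖ₑ := by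
  rcases le_total a b with hab | hab
  · rw [uIoc_of_le hab, S.measure_Ioc, Real.enorm_of_nonneg (sub_nonneg.2 (S.mono hab))]
  · rw [uIoc_of_ge hab, S.measure_Ioc, ← enorm_neg, neg_sub,
      Real.enorm_of_nonneg (sub_nonneg.2 (S.mono hab))]

lemma integral_sub_eq_integral_uIoc_norm (S : StieltjesFunction ℝ) (c x : ℝ) :
    ∫ u in c..x, (S u - S c) = ∫ u in Ι c x, ‖S u - S c‖ := by
  rcases le_total c x with hcx | hxc
  · rw [intervalIntegral.integral_of_le hcx, uIoc_of_le hcx]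
    refine setIntegral_congr_fun measurableSet_Ioc fun u hu => ?_
    exact (Real.norm_of_nonneg (sub_nonneg.2 (S.mono hu.1.le))).symm
  · rw [intervalIntegral.integral_of_ge hxc, uIoc_of_ge hxc, ← integral_neg]
    refine setIntegral_congr_fun measurableSet_Ioc fun u hu => ?_
    exact (Real.norm_of_nonpos (sub_nonpos.2 (S.mono hu.2))).symm

lemma ofReal_integral_sub_eq_lintegral_measure_uIoc (S : StieltjesFunction ℝ) (c x : ℝ) :
    ENNReal.ofReal (∫ u in c..x, (S u - S c)) = ∫⁻ u in Ι c x, S.measure (Ι c u) := by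
  have hint : IntervalIntegrable (fun u => S u - S c) volume c x :=
    S.mono.intervalIntegrable.sub intervalIntegrable_const
  rw [integral_sub_eq_integral_uIoc_norm,
    ofReal_integral_norm_eq_lintegral_enorm (intervalIntegrable_iff.1 hint)]
  simp only [measure_uIoc_eq_enorm]

lemma volume_setOf_mem_uIoc (c a x : ℝ) :
    volume {u | u ∈ Ι c x ∧ a ∈ Ι c u} = ENNReal.ofReal (hingeRemainder c a x) := by
  by_cases hca : c < a
  · have : {u | u ∈ Ι c x ∧ a ∈ Ι c u} = Icc a x := by
      ext u
      simp only [mem_ofPred_eq, mem_uIoc, mem_Icc]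
      grind
    rw [this, Real.volume_Icc, hingeRemainder, if_pos hca, ENNReal.ofReal_max]
    simp
  · have : {u | u ∈ Ι c x ∧ a ∈ Ι c u} = Ioo x a := by
      ext u
      simp only [mem_ofPred_eq, mem_uIoc, mem_Ioo]
      grind
    rw [this, Real.volume_Ioo, hingeRemainder, if_neg hca, ENNReal.ofReal_max]
    simp

lemma lintegral_measure_uIoc (ρ : Measure ℝ) [SFinite ρ] (c x : ℝ) :
    ∫⁻ u in Ι c x, ρ (Ι c u) = ∫⁻ a, ENNReal.ofReal (hingeRemainder c a x) ∂ρ := by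
  set E : Set (ℝ × ℝ) := {z | z.1 ∈ Ι c x ∧ z.2 ∈ Ι c z.1} with hE
  have hEm : MeasurableSet E := by
    simp only [hE, mem_uIoc]
    measurability
  calc ∫⁻ u in Ι c x, ρ (Ι c u) = (volume.prod ρ) E := by
        rw [Measure.prod_apply hEm, ← lintegral_indicator measurableSet_uIoc]
        refine lintegral_congr fun u => ?_
        by_cases hu : u ∈ Ι c x <;> simp [hE, hu]
    _ = ∫⁻ a, ENNReal.ofReal (hingeRemainder c a x) ∂ρ := by
        rw [Measure.prod_apply_symm hEm]
        exact lintegral_congr fun a => volume_setOf_mem_uIoc c a x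

/-- Taylor's formula with integral remainder: `s` plays the role of `φ' c`, and `ρ` of `φ''`. -/
lemma exists_taylor_of_convexOn {φ : ℝ → ℝ} (hφ : ConvexOn ℝ univ φ) (c : ℝ) :
    ∃ (ρ : Measure ℝ) (_ : SFinite ρ) (s : ℝ), ∀ x, 0 ≤ φ x - φ c - s * (x - c) ∧
      ENNReal.ofReal (φ x - φ c - s * (x - c))
        = ∫⁻ a, ENNReal.ofReal (hingeRemainder c a x) ∂ρ := by
  obtain ⟨S, hS⟩ := exists_stieltjesFunction_integral_eq_sub hφ
  refine ⟨S.measure, inferInstance, S c, fun x => ?_⟩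
  have hremainder : φ x - φ c - S c * (x - c) = ∫ u in c..x, (S u - S c) := by
    rw [intervalIntegral.integral_sub S.mono.intervalIntegrable intervalIntegrable_const, hS,
      intervalIntegral.integral_const, smul_eq_mul, mul_comm]
  rw [hremainder, ← lintegral_measure_uIoc, ofReal_integral_sub_eq_lintegral_measure_uIoc,
    integral_sub_eq_integral_uIoc_norm]
  exact ⟨by positivity, rfl⟩

end ConvexTaylor

section StopLoss

/-- The stop-loss transform `a ↦ ∫ (x - a)⁺ dμ(x)`, which determines the convex order among
measures of equal mass and mean. -/
noncomputable def stopLoss (μ : Measure ℝ) (a : ℝ) : ℝ := ∫ x, max (x - a) 0 ∂μ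

lemma stopLoss_nonneg (μ : Measure ℝ) (a : ℝ) : 0 ≤ stopLoss μ a :=
  integral_nonneg fun _ => le_max_right _ _

variable {μ ν : Measure ℝ} [IsFiniteMeasure μ] [IsFiniteMeasure ν]

lemma integrable_hinge (hμ : Integrable (fun x : ℝ => x) μ) (a : ℝ) :
    Integrable (fun x => max (x - a) 0) μ :=
  (hμ.sub (integrable_const a)).pos_part

lemma ofReal_stopLoss (hμ : Integrable (fun x : ℝ => x) μ) (a : ℝ) :
    ENNReal.ofReal (stopLoss μ a) = ∫⁻ x, ENNReal.ofReal (x - a) ∂μ := by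
  rw [stopLoss, ofReal_integral_eq_lintegral_ofReal (integrable_hinge hμ a)
    (.of_forall fun x => le_max_right _ _)]
  simp

lemma integrable_hingeRemainder (hμ : Integrable (fun x : ℝ => x) μ) (c a : ℝ) :
    Integrable (hingeRemainder c a) μ := by
  unfold hingeRemainder
  split_ifs
  · exact integrable_hinge hμ a
  · exact ((integrable_const a).sub hμ).pos_part

lemma integral_hingeRemainder (hμ : Integrable (fun x : ℝ => x) μ) (c a : ℝ) :
    ∫ x, hingeRemainder c a x ∂μ
      = stopLoss μ a - if c < a then 0 else ∫ x, x ∂μ - a * μ.real univ := by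
  unfold hingeRemainder
  split_ifs
  · rw [sub_zero, stopLoss]
  · have hput : ∀ x, max (a - x) 0 = max (x - a) 0 - (x - a) := fun x => by
      rw [← neg_sub x a]
      linarith [max_zero_sub_max_neg_zero_eq_self (x - a)]
    simp only [hput]
    rw [integral_sub (g := fun x => x - a) (integrable_hinge hμ a) (hμ.sub (integrable_const a)),
      integral_sub hμ (integrable_const a), integral_const, smul_eq_mul, mul_comm a, stopLoss]

lemma integral_hingeRemainder_le (hμ : Integrable (fun x : ℝ => x) μ)
    (hν : Integrable (fun x : ℝ => x) ν) (hmass : μ.real univ = ν.real univ)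
    (hmean : ∫ x, x ∂μ = ∫ x, x ∂ν) (h : ∀ a, stopLoss μ a ≤ stopLoss ν a) (c a : ℝ) :
    ∫ x, hingeRemainder c a x ∂μ ≤ ∫ x, hingeRemainder c a x ∂ν := by
  rw [integral_hingeRemainder hμ, integral_hingeRemainder hν, hmass, hmean]
  exact sub_le_sub_right (h a) _

lemma hingeRemainder_nonneg (c a x : ℝ) : 0 ≤ hingeRemainder c a x := by
  unfold hingeRemainder
  split_ifs <;> exact le_max_right _ _

lemma integral_sub_sub_mul {φ : ℝ → ℝ} (hμ : Integrable (fun x : ℝ => x) μ)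
    (hφ : Integrable φ μ) (b s : ℝ) :
    ∫ x, (φ x - b - s * x) ∂μ = ∫ x, φ x ∂μ - b * μ.real univ - s * ∫ x, x ∂μ := by
  rw [integral_sub (f := fun x => φ x - b) (hφ.sub (integrable_const b)) (hμ.const_mul s),
    integral_sub hφ (integrable_const b), integral_const, integral_const_mul, smul_eq_mul,
    mul_comm b]

lemma ofReal_integral_eq_lintegral_hingeRemainder {ψ : ℝ → ℝ} {ρ : Measure ℝ} [SFinite ρ] {c : ℝ}
    (hψ : ∀ x, 0 ≤ ψ x)
    (hρ : ∀ x, ENNReal.ofReal (ψ x) = ∫⁻ a, ENNReal.ofReal (hingeRemainder c a x) ∂ρ)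
    (hμ : Integrable (fun x : ℝ => x) μ) (hψμ : Integrable ψ μ) :
    ENNReal.ofReal (∫ x, ψ x ∂μ) = ∫⁻ a, ENNReal.ofReal (∫ x, hingeRemainder c a x ∂μ) ∂ρ := by
  calc ENNReal.ofReal (∫ x, ψ x ∂μ)
      = ∫⁻ x, ∫⁻ a, ENNReal.ofReal (hingeRemainder c a x) ∂ρ ∂μ := by
        rw [ofReal_integral_eq_lintegral_ofReal hψμ (.of_forall hψ)]
        simp only [hρ]
    _ = ∫⁻ a, ∫⁻ x, ENNReal.ofReal (hingeRemainder c a x) ∂μ ∂ρ :=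
        (lintegral_lintegral_swap
          (measurable_uncurry_hingeRemainder c).ennreal_ofReal.aemeasurable).symm
    _ = ∫⁻ a, ENNReal.ofReal (∫ x, hingeRemainder c a x ∂μ) ∂ρ :=
        lintegral_congr fun a => (ofReal_integral_eq_lintegral_ofReal
          (integrable_hingeRemainder hμ c a) (.of_forall (hingeRemainder_nonneg c a))).symm

theorem convexOrder_of_stopLoss_le (hμ : Integrable (fun x : ℝ => x) μ)
    (hν : Integrable (fun x : ℝ => x) ν) (hmass : μ.real univ = ν.real univ)
    (hmean : ∫ x, x ∂μ = ∫ x, x ∂ν) (h : ∀ a, stopLoss μ a ≤ stopLoss ν a) :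
    ConvexOrder μ ν := by
  intro φ hφ hφμ hφν
  obtain ⟨ρ, _, s, hρ⟩ := exists_taylor_of_convexOn hφ 0
  simp only [sub_zero] at hρ
  obtain ⟨hnonneg, htaylor⟩ := forall_and.1 hρ
  have hremainder : ∫ x, (φ x - φ 0 - s * x) ∂μ ≤ ∫ x, (φ x - φ 0 - s * x) ∂ν := by
    rw [← ENNReal.ofReal_le_ofReal_iff (integral_nonneg hnonneg),
      ofReal_integral_eq_lintegral_hingeRemainder hnonneg htaylor hμ
        ((hφμ.sub (integrable_const _)).sub (hμ.const_mul s)),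
      ofReal_integral_eq_lintegral_hingeRemainder hnonneg htaylor hν
        ((hφν.sub (integrable_const _)).sub (hν.const_mul s))]
    exact lintegral_mono fun a =>
      ENNReal.ofReal_le_ofReal (integral_hingeRemainder_le hμ hν hmass hmean h 0 a)
  rw [integral_sub_sub_mul hμ hφμ, integral_sub_sub_mul hν hφν, hmass, hmean] at hremainder
  linarith

end StopLoss

section Convolution

lemma measureReal_univ_conv {M : Type*} [AddMonoid M] [MeasurableSpace M] [MeasurableAdd₂ M]
    (μ ν : Measure M) [SFinite μ] [SFinite ν] :
    (μ ∗ ν).real univ = μ.real univ * ν.real univ := by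
  rw [Measure.conv, map_measureReal_apply (by fun_prop) .univ, preimage_univ, ← univ_prod_univ,
    measureReal_prod_prod]

lemma lintegral_ofReal_sub_conv (μ ν : Measure ℝ) [SFinite μ] [SFinite ν] (b : ℝ) :
    ∫⁻ x, ENNReal.ofReal (x - b) ∂(μ ∗ ν) = ∫⁻ u, μ (Ioi u) * ν (Ioi (b - u)) := by
  set E : Set (ℝ × ℝ × ℝ) := {w | w.1 < w.2.1 ∧ b - w.1 < w.2.2} with hE
  have hEm : MeasurableSet E := by
    rw [hE, ofPred_and]
    exact (measurableSet_lt (by fun_prop) (by fun_prop)).inter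
      (measurableSet_lt (by fun_prop) (by fun_prop))
  have hvertical : ∀ u, Prod.mk u ⁻¹' E = Ioi u ×ˢ Ioi (b - u) := fun u => rfl
  have hhorizontal : ∀ z : ℝ × ℝ, (fun u => (u, z)) ⁻¹' E = Ioo (b - z.2) z.1 := fun z => by
    ext u
    simp only [hE, mem_preimage, mem_ofPred_eq, mem_Ioo, sub_lt_comm (a := b), and_comm]
  calc ∫⁻ x, ENNReal.ofReal (x - b) ∂(μ ∗ ν)
      = ∫⁻ z, ENNReal.ofReal (z.1 + z.2 - b) ∂(μ.prod ν) := by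
        rw [Measure.conv, lintegral_map (by fun_prop) (by fun_prop)]
    _ = (volume.prod (μ.prod ν)) E := by
        rw [Measure.prod_apply_symm hEm]
        simp only [hhorizontal, Real.volume_Ioo, sub_sub_eq_add_sub]
    _ = ∫⁻ u, μ (Ioi u) * ν (Ioi (b - u)) := by
        rw [Measure.prod_apply hEm]
        simp only [hvertical, Measure.prod_prod]

variable {μ ν : Measure ℝ} [IsFiniteMeasure μ] [IsFiniteMeasure ν]

lemma integrable_id_conv (hμ : Integrable (fun x : ℝ => x) μ)
    (hν : Integrable (fun x : ℝ => x) ν) : Integrable (fun x : ℝ => x) (μ ∗ ν) := by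
  rw [Measure.conv, integrable_map_measure (by fun_prop) (by fun_prop)]
  exact (hμ.comp_fst ν).add (hν.comp_snd μ)

lemma integral_id_conv (hμ : Integrable (fun x : ℝ => x) μ)
    (hν : Integrable (fun x : ℝ => x) ν) :
    ∫ x, x ∂(μ ∗ ν) = (∫ x, x ∂μ) * ν.real univ + μ.real univ * ∫ x, x ∂ν := by
  have hinner : ∀ x : ℝ, ∫ y, (x + y) ∂ν = x * ν.real univ + ∫ y, y ∂ν := fun x => by
    rw [integral_add (integrable_const x) hν, integral_const, smul_eq_mul, mul_comm]
  rw [integral_conv (integrable_id_conv hμ hν)]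
  simp only [hinner]
  rw [integral_add (hμ.mul_const _) (integrable_const _), integral_mul_const, integral_const,
    smul_eq_mul]

lemma stopLoss_sub (μ : Measure ℝ) (a z : ℝ) :
    stopLoss μ (a - z) = ∫ y, max (z + y - a) 0 ∂μ := by
  simp only [stopLoss, sub_sub_eq_add_sub, add_comm]

lemma integrable_stopLoss_sub (hμ : Integrable (fun x : ℝ => x) μ)
    (hν : Integrable (fun x : ℝ => x) ν) (a : ℝ) :
    Integrable (fun z => stopLoss ν (a - z)) μ := by
  simp only [stopLoss_sub]
  exact ((integrable_map_measure (by fun_prop) (by fun_prop)).1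
    (integrable_hinge (integrable_id_conv hμ hν) a)).integral_prod_left

lemma stopLoss_conv (hμ : Integrable (fun x : ℝ => x) μ)
    (hν : Integrable (fun x : ℝ => x) ν) (a : ℝ) :
    stopLoss (μ ∗ ν) a = ∫ z, stopLoss ν (a - z) ∂μ := by
  simp only [stopLoss_sub]
  exact integral_conv (integrable_hinge (integrable_id_conv hμ hν) a)

end Convolution

section Tails

lemma measurable_tail_mul_tail (μ ν : Measure ℝ) (b : ℝ) :
    Measurable fun u => μ (Ioi u) * ν (Ioi (b - u)) := by
  have hanti : ∀ κ : Measure ℝ, Antitone fun u => κ (Ioi u) := fun κ _ _ huv =>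
    measure_mono (Ioi_subset_Ioi huv)
  exact (hanti μ).measurable.mul ((hanti ν).measurable.comp (by fun_prop))

variable {μ ν : Measure ℝ} [IsFiniteMeasure μ] [IsFiniteMeasure ν]

lemma lintegral_tail_mul_tail (hμ : Integrable (fun x : ℝ => x) μ)
    (hν : Integrable (fun x : ℝ => x) ν) (b : ℝ) :
    ∫⁻ u, μ (Ioi u) * ν (Ioi (b - u)) = ENNReal.ofReal (stopLoss (μ ∗ ν) b) := by
  rw [ofReal_stopLoss (integrable_id_conv hμ hν), lintegral_ofReal_sub_conv]

lemma integrable_tail_mul_tail (hμ : Integrable (fun x : ℝ => x) μ)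
    (hν : Integrable (fun x : ℝ => x) ν) (b : ℝ) :
    Integrable fun u => μ.real (Ioi u) * ν.real (Ioi (b - u)) := by
  simp only [Measure.real, ← ENNReal.toReal_mul]
  refine integrable_toReal_of_lintegral_ne_top (measurable_tail_mul_tail μ ν b).aemeasurable ?_
  rw [lintegral_tail_mul_tail hμ hν]
  exact ENNReal.ofReal_ne_top

lemma integral_tail_mul_tail (hμ : Integrable (fun x : ℝ => x) μ)
    (hν : Integrable (fun x : ℝ => x) ν) (b : ℝ) :
    ∫ u, μ.real (Ioi u) * ν.real (Ioi (b - u)) = stopLoss (μ ∗ ν) b := by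
  simp only [Measure.real, ← ENNReal.toReal_mul]
  rw [integral_toReal (measurable_tail_mul_tail μ ν b).aemeasurable
    (.of_forall fun u => ENNReal.mul_lt_top (measure_lt_top _ _) (measure_lt_top _ _)),
    lintegral_tail_mul_tail hμ hν,
    ENNReal.toReal_ofReal (stopLoss_nonneg _ b)]

lemma distFun_sub_distFun (hmass : μ.real univ = ν.real univ) (t : ℝ) :
    distFun μ t - distFun ν t = ν.real (Ioi t) - μ.real (Ioi t) := by
  have hdist : ∀ (κ : Measure ℝ) [IsFiniteMeasure κ],
      distFun κ t = κ.real univ - κ.real (Ioi t) := fun κ _ => by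
    rw [← measureReal_compl measurableSet_Ioi, compl_Ioi]
    rfl
  rw [hdist μ, hdist ν, hmass]
  ring

lemma fconv_distFun_sub_distFun (hμ : Integrable (fun x : ℝ => x) μ)
    (hν : Integrable (fun x : ℝ => x) ν) (hmass : μ.real univ = ν.real univ) (b : ℝ) :
    fconv (fun t => distFun μ t - distFun ν t) (fun t => distFun μ t - distFun ν t) b
      = stopLoss (μ ∗ μ) b + stopLoss (ν ∗ ν) b - 2 * stopLoss (μ ∗ ν) b := by
  have hexpand : ∀ t, (ν.real (Ioi t) - μ.real (Ioi t))
        * (ν.real (Ioi (b - t)) - μ.real (Ioi (b - t)))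
      = μ.real (Ioi t) * μ.real (Ioi (b - t)) + ν.real (Ioi t) * ν.real (Ioi (b - t))
        - (μ.real (Ioi t) * ν.real (Ioi (b - t)) + ν.real (Ioi t) * μ.real (Ioi (b - t))) :=
    fun t => by ring
  simp only [fconv, distFun_sub_distFun hmass, hexpand]
  rw [integral_sub
      ((integrable_tail_mul_tail hμ hμ b).fun_add (integrable_tail_mul_tail hν hν b))
      ((integrable_tail_mul_tail hμ hν b).fun_add (integrable_tail_mul_tail hν hμ b)),
    integral_add (integrable_tail_mul_tail hμ hμ b) (integrable_tail_mul_tail hν hν b),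
    integral_add (integrable_tail_mul_tail hμ hν b) (integrable_tail_mul_tail hν hμ b),
    integral_tail_mul_tail hμ hμ, integral_tail_mul_tail hν hν, integral_tail_mul_tail hμ hν,
    integral_tail_mul_tail hν hμ, Measure.conv_comm ν μ, two_mul]

end Tails

section FiniteMeanMeasure

/-- Finite Borel measures on `ℝ` with finite first moment. They form a commutative monoid under
convolution, in which `convPow` is the power and `convList` the product. -/
structure FiniteMeanMeasure where
  toMeasure : Measure ℝ
  [isFiniteMeasure : IsFiniteMeasure toMeasure]
  integrable_id : Integrable (fun x : ℝ => x) toMeasure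

namespace FiniteMeanMeasure

attribute [instance] isFiniteMeasure

instance : Coe FiniteMeanMeasure (Measure ℝ) := ⟨toMeasure⟩

lemma toMeasure_injective : Function.Injective toMeasure := by
  rintro ⟨μ, _⟩ ⟨ν, _⟩ rfl
  rfl

noncomputable instance : CommMonoid FiniteMeanMeasure where
  mul μ ν := ⟨μ ∗ ν, integrable_id_conv μ.integrable_id ν.integrable_id⟩
  one := ⟨Measure.dirac 0, integrable_dirac (by simp)⟩
  mul_assoc _ _ _ := toMeasure_injective (Measure.conv_assoc _ _ _)
  one_mul _ := toMeasure_injective (Measure.dirac_zero_conv _)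
  mul_one _ := toMeasure_injective (Measure.conv_dirac_zero _)
  mul_comm _ _ := toMeasure_injective (Measure.conv_comm _ _)

lemma coe_mul (μ ν : FiniteMeanMeasure) : ((μ * ν : FiniteMeanMeasure) : Measure ℝ) = μ ∗ ν := rfl

lemma coe_pow (μ : FiniteMeanMeasure) (n : ℕ) :
    ((μ ^ n : FiniteMeanMeasure) : Measure ℝ) = convPow μ n := by
  induction n with
  | zero => rw [pow_zero]; rfl
  | succ n ih => rw [pow_succ, coe_mul, ih]; rfl

lemma coe_list_prod (l : List FiniteMeanMeasure) :
    (l.prod : Measure ℝ) = convList (l.map toMeasure) := by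
  induction l with
  | nil => rfl
  | cons μ l ih => rw [List.prod_cons, coe_mul, ih]; rfl

lemma coe_prod {m : ℕ} (X : Fin m → FiniteMeanMeasure) :
    ((∏ l, X l : FiniteMeanMeasure) : Measure ℝ)
      = convList (List.ofFn fun l => (X l : Measure ℝ)) := by
  rw [← List.prod_ofFn, coe_list_prod, List.map_ofFn]
  rfl

lemma nonnegOnSqSub_stopLoss {μ ν : FiniteMeanMeasure}
    (hmass : μ.toMeasure.real univ = ν.toMeasure.real univ)
    (hF : ∀ b, 0 ≤ fconv (fun t => distFun μ t - distFun ν t)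
      (fun t => distFun μ t - distFun ν t) b) (a : ℝ) :
    NonnegOnSqSub (fun κ : FiniteMeanMeasure => stopLoss κ a) μ ν := by
  intro κ
  have hsquare : ∀ b, 2 * stopLoss (μ * ν : FiniteMeanMeasure) b
      ≤ stopLoss (μ * μ : FiniteMeanMeasure) b + stopLoss (ν * ν : FiniteMeanMeasure) b := by
    intro b
    have := hF b
    rw [fconv_distFun_sub_distFun μ.integrable_id ν.integrable_id hmass] at this
    simp only [coe_mul]
    linarith
  have hint := fun ρ : FiniteMeanMeasure =>
    integrable_stopLoss_sub κ.integrable_id ρ.integrable_id a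
  have hconv := fun ρ : FiniteMeanMeasure => stopLoss_conv κ.integrable_id ρ.integrable_id a
  simp only [coe_mul κ, hconv]
  rw [← integral_const_mul, ← integral_add (hint _) (hint _)]
  exact integral_mono ((hint _).const_mul 2) ((hint _).add (hint _)) fun z => hsquare (a - z)

end FiniteMeanMeasure

end FiniteMeanMeasure

section Wmeas

open FiniteMeanMeasure

variable {m : ℕ} (X : Fin m → FiniteMeanMeasure) (p : Fin m → ℕ)

lemma Wmeas_coe :
    Wmeas p (fun l => (X l : Measure ℝ)) = (m.factorial : ENNReal)⁻¹ •
      ∑ π : Equiv.Perm (Fin m), ((∏ l, X (π l) ^ p l : FiniteMeanMeasure) : Measure ℝ) := by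
  simp only [Wmeas, coe_prod, coe_pow]

instance isFiniteMeasure_Wmeas : IsFiniteMeasure (Wmeas p fun l => (X l : Measure ℝ)) := by
  rw [Wmeas_coe]
  exact Measure.smul_finite _ (by simp [Nat.factorial_ne_zero])

lemma integrable_Wmeas {g : ℝ → ℝ} (hg : ∀ μ : FiniteMeanMeasure, Integrable g μ) :
    Integrable g (Wmeas p fun l => (X l : Measure ℝ)) := by
  rw [Wmeas_coe]
  exact (integrable_finsetSum_measure.2 fun π _ => hg _).smul_measure
    (by simp [Nat.factorial_ne_zero])

lemma integral_Wmeas {g : ℝ → ℝ} (hg : ∀ μ : FiniteMeanMeasure, Integrable g μ) :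
    ∫ x, g x ∂(Wmeas p fun l => (X l : Measure ℝ))
      = (m.factorial : ℝ)⁻¹ * symSum (fun μ : FiniteMeanMeasure => ∫ x, g x ∂μ) X p := by
  rw [Wmeas_coe, integral_smul_measure, integral_finsetSum_measure fun π _ => hg _,
    ENNReal.toReal_inv, ENNReal.toReal_natCast, smul_eq_mul, symSum]

variable {X p} {q : Fin m → ℕ}

lemma measureReal_univ_Wmeas_eq_of_majorizes
    (hmass : ∀ i j, (X i).toMeasure.real univ = (X j).toMeasure.real univ)
    (hpq : Majorizes p q) :
    (Wmeas p fun l => (X l : Measure ℝ)).real univ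
      = (Wmeas q fun l => (X l : Measure ℝ)).real univ := by
  have hone : ∀ r : Fin m → ℕ, (Wmeas r fun l => (X l : Measure ℝ)).real univ
      = (m.factorial : ℝ)⁻¹ * symSum (fun μ : FiniteMeanMeasure => μ.toMeasure.real univ) X r :=
    fun r => by simpa using integral_Wmeas X r (g := fun _ => 1) fun _ => integrable_const 1
  rw [hone, hone, symSum_eq_of_majorizes (fun i j κ => ?_) hpq]
  simp only [coe_mul, measureReal_univ_conv, hmass i j]
  ring

lemma integral_id_Wmeas_eq_of_majorizes
    (hmass : ∀ i j, (X i).toMeasure.real univ = (X j).toMeasure.real univ)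
    (hpq : Majorizes p q) :
    ∫ x, x ∂(Wmeas p fun l => (X l : Measure ℝ))
      = ∫ x, x ∂(Wmeas q fun l => (X l : Measure ℝ)) := by
  rw [integral_Wmeas X p integrable_id, integral_Wmeas X q integrable_id,
    symSum_eq_of_majorizes (fun i j κ => ?_) hpq]
  simp only [coe_mul, integral_id_conv, measureReal_univ_conv, hmass i j, integrable_id,
    integrable_id_conv]
  ring

lemma stopLoss_Wmeas_le_of_majorizes {a : ℝ}
    (h : ∀ i j, NonnegOnSqSub (fun μ : FiniteMeanMeasure => stopLoss μ a) (X i) (X j))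
    (hpq : Majorizes p q) :
    stopLoss (Wmeas p fun l => (X l : Measure ℝ)) a
      ≤ stopLoss (Wmeas q fun l => (X l : Measure ℝ)) a := by
  have hhinge := fun μ : FiniteMeanMeasure => integrable_hinge μ.integrable_id a
  rw [stopLoss, stopLoss, integral_Wmeas X p hhinge, integral_Wmeas X q hhinge]
  exact mul_le_mul_of_nonneg_left (symSum_le_of_majorizes h hpq) (by positivity)

end Wmeas

/-- Theorem 3.8, Muirhead-type inequality for measures: under
equal masses, finite first moments and the convolution-positivity condition on the
distribution functions, p ≺ q implies W^p(μ₁,…,μ_m) ≼ₓ W^q(μ₁,…,μ_m). -/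
theorem stmt14 (m : ℕ) (μ : Fin m → Measure ℝ) [∀ i, IsFiniteMeasure (μ i)]
    (hmass : ∀ i j, μ i Set.univ = μ j Set.univ)
    (hint : ∀ l, Integrable (fun x : ℝ => |x|) (μ l))
    (hF : ∀ i j, ∀ x : ℝ, 0 ≤ fconv (fun t => distFun (μ i) t - distFun (μ j) t)
      (fun t => distFun (μ i) t - distFun (μ j) t) x)
    (p q : Fin m → ℕ) (hpq : Majorizes p q) :
    ConvexOrder (Wmeas p μ) (Wmeas q μ) := by
  have hid : ∀ l, Integrable (fun x : ℝ => x) (μ l) := fun l =>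
    (integrable_norm_iff (by fun_prop)).1 (hint l)
  let X : Fin m → FiniteMeanMeasure := fun l => ⟨μ l, hid l⟩
  have hmassX : ∀ i j, (X i).toMeasure.real univ = (X j).toMeasure.real univ := fun i j =>
    congrArg ENNReal.toReal (hmass i j)
  have hsq : ∀ a i j, NonnegOnSqSub (fun κ : FiniteMeanMeasure => stopLoss κ a) (X i) (X j) :=
    fun a i j => FiniteMeanMeasure.nonnegOnSqSub_stopLoss (hmassX i j) (hF i j) a
  change ConvexOrder (Wmeas p fun l => (X l : Measure ℝ)) (Wmeas q fun l => (X l : Measure ℝ))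
  exact convexOrder_of_stopLoss_le
    (integrable_Wmeas X p FiniteMeanMeasure.integrable_id)
    (integrable_Wmeas X q FiniteMeanMeasure.integrable_id)
    (measureReal_univ_Wmeas_eq_of_majorizes hmassX hpq)
    (integral_id_Wmeas_eq_of_majorizes hmassX hpq)
    (fun a => stopLoss_Wmeas_le_of_majorizes (hsq a) hpq)
end

section
/- If p ≺ q (q majorizes p) are m-tuples of non-negative integers and x₁,…,x_m > 0, then W^p(x₁,…,x_m) ≤ W^q(x₁,…,x_m) (Muirhead's inequality with integer exponents). -/
open MeasureTheory Set

/-!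
A nonincreasing tuple dominated by `q` is reached from `q` by finitely many transfers of one unit
from a larger entry to a smaller one. Such a transfer does not increase the symmetric sum:
exchanging the two exponents involved leaves symmetric sums unchanged, and adding the sums before
and after the exchange reduces the claim, term by term, to
`y ^ a * z ^ b + z ^ a * y ^ b ≤ y ^ (a + b) + z ^ (a + b)`.
-/

section UnitTransfer

variable {ι : Type*} [DecidableEq ι] {p q r : ι → ℕ} {i j : ι}

/-- A unit transfer, the elementary step of Muirhead's argument: one unit of an entry `q i` is moved
to a smaller entry `q j`, turning `q` into `r`. The equation is written additively so that no
truncated subtraction occurs. -/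
def UnitTransfer (q r : ι → ℕ) : Prop :=
  ∃ i j, q j < q i ∧ r + Pi.single i 1 = q + Pi.single j 1

lemma sum_eq_of_add_single_eq (hr : r + Pi.single i 1 = q + Pi.single j 1) {s : Finset ι}
    (hi : i ∈ s) (hj : j ∈ s) : ∑ l ∈ s, r l = ∑ l ∈ s, q l := by
  have hsum := congrArg (fun f : ι → ℕ => ∑ l ∈ s, f l) hr
  simpa [Finset.sum_add_distrib, Finset.sum_pi_single', hi, hj] using hsum

lemma sum_tsub_lt_of_add_single_eq [Fintype ι] (hi : p i < q i) (hj : q j < p j)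
    (hr : r + Pi.single i 1 = q + Pi.single j 1) : ∑ l, (r l - p l) < ∑ l, (q l - p l) := by
  have hrl (l : ι) : r l + (Pi.single i 1 : ι → ℕ) l = q l + (Pi.single j 1 : ι → ℕ) l :=
    congrFun hr l
  exact Finset.sum_lt_sum (fun l _ => by grind) ⟨i, Finset.mem_univ i, by grind⟩

end UnitTransfer

section Dominance

variable {ι : Type*} [LinearOrder ι] [Fintype ι] [LocallyFiniteOrderBot ι]
  {p q r : ι → ℕ} {i j : ι}

/-- The dominance order, of which majorization is the instance for sorted tuples: `p` and
`q` have the same total and each prefix sum of `p` is at most that of `q`. Unlike in `Majorizes`,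
the entries are taken in the given order, without sorting. -/
def Dominated (p q : ι → ℕ) : Prop :=
  ∑ l, p l = ∑ l, q l ∧ ∀ k, ∑ l ∈ Finset.Iic k, p l ≤ ∑ l ∈ Finset.Iic k, q l

lemma Dominated.eq_of_le (h : Dominated p q) (hle : p ≤ q) : p = q :=
  funext fun l => (Finset.sum_eq_sum_iff_of_le fun i _ => hle i).1 h.1 l (Finset.mem_univ l)

lemma Dominated.exists_first_lt (h : Dominated p q) (hne : p ≠ q) :
    ∃ j, q j < p j ∧ ∀ l < j, p l ≤ q l := by
  have hlt : ∃ j, q j < p j := by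
    by_contra! hle
    exact hne (h.eq_of_le hle)
  obtain ⟨j, hj, hmin⟩ := wellFounded_lt.has_min {j | q j < p j} hlt
  exact ⟨j, hj, fun l hl => not_lt.1 fun hlt => hmin l hlt hl⟩

lemma Dominated.exists_lt_of_lt (h : Dominated p q) (hj : q j < p j) : ∃ i < j, p i < q i := by
  by_contra! hle
  refine (h.2 j).not_gt (Finset.sum_lt_sum (fun l hl => ?_) ⟨j, Finset.mem_Iic.2 le_rfl, hj⟩)
  rcases (Finset.mem_Iic.1 hl).lt_or_eq with hlj | rfl
  exacts [hle l hlj, hj.le]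

lemma Dominated.of_add_single_eq (h : Dominated p q) (hij : i < j) (hi : p i < q i)
    (hle : ∀ l < j, p l ≤ q l) (hr : r + Pi.single i 1 = q + Pi.single j 1) : Dominated p r := by
  refine ⟨by rw [sum_eq_of_add_single_eq hr (Finset.mem_univ i) (Finset.mem_univ j), h.1],
    fun k => ?_⟩
  -- Before `j` the entrywise comparison with `p` survives; from `j` on prefix sums are unchanged.
  rcases lt_or_ge k j with hkj | hjk
  · have hpr : ∀ l < j, p l ≤ r l := fun l hlj => by
      have hrl : r l + (Pi.single i 1 : ι → ℕ) l = q l + (Pi.single j 1 : ι → ℕ) l := congrFun hr l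
      grind
    exact Finset.sum_le_sum fun l hl => hpr l ((Finset.mem_Iic.1 hl).trans_lt hkj)
  · rw [sum_eq_of_add_single_eq hr (Finset.mem_Iic.2 (hij.le.trans hjk)) (Finset.mem_Iic.2 hjk)]
    exact h.2 k

lemma Dominated.exists_unitTransfer (h : Dominated p q) (hp : Antitone p) (hne : p ≠ q) :
    ∃ r, UnitTransfer q r ∧ Dominated p r ∧ ∑ l, (r l - p l) < ∑ l, (q l - p l) := by
  obtain ⟨j, hj, hle⟩ := h.exists_first_lt hne
  obtain ⟨i, hij, hi⟩ := h.exists_lt_of_lt hj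
  have hji : q j < q i := (hj.trans_le (hp hij.le)).trans hi
  have hsingle : Pi.single i 1 ≤ q + Pi.single j 1 := fun l => by grind [Pi.add_apply]
  have hr : q + Pi.single j 1 - Pi.single i 1 + Pi.single i 1 = q + Pi.single j 1 :=
    tsub_add_cancel_of_le hsingle
  exact ⟨_, ⟨i, j, hji, hr⟩, h.of_add_single_eq hij hi hle hr,
    sum_tsub_lt_of_add_single_eq hi hj hr⟩

theorem Dominated.reflTransGen_unitTransfer (h : Dominated p q) (hp : Antitone p) :
    Relation.ReflTransGen UnitTransfer q p := by
  induction hn : ∑ l, (q l - p l) using Nat.strong_induction_on generalizing q with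
  | _ n ih =>
    rcases eq_or_ne p q with rfl | hne
    · rfl
    obtain ⟨r, hqr, hpr, hlt⟩ := h.exists_unitTransfer hp hne
    exact .head hqr (ih _ (hn ▸ hlt) hpr rfl)

end Dominance

section SymmSum

lemma single_comp_perm {α M : Type*} [DecidableEq α] [Zero M] (i : α) (a : M) (σ : Equiv.Perm α) :
    (Pi.single i a : α → M) ∘ σ = Pi.single (σ.symm i) a :=
  Function.update_comp_equiv (0 : α → M) σ i a

variable {ι R : Type*} [Fintype ι] [CommSemiring R]

/-- The symmetric sum `Σ_π Π_l x_{π(l)}^{p_l}`, that is, `W^p` without the factor `1/m!`; this makes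
sense over any commutative semiring. -/
def symmSum [DecidableEq ι] (p : ι → ℕ) (x : ι → R) : R :=
  ∑ π : Equiv.Perm ι, ∏ l, x (π l) ^ p l

lemma symmSum_comp_perm [DecidableEq ι] (p : ι → ℕ) (σ : Equiv.Perm ι) (x : ι → R) :
    symmSum (p ∘ σ) x = symmSum p x := by
  unfold symmSum
  rw [← Equiv.sum_comp (Equiv.mulRight σ)]
  exact Finset.sum_congr rfl fun π _ => Equiv.prod_comp σ fun l => x (π l) ^ p l

lemma prod_pow_add_single [DecidableEq ι] (u : ι → ℕ) (i : ι) (a : ℕ) (y : ι → R) :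
    ∏ l, y l ^ (u + Pi.single i a : ι → ℕ) l = (∏ l, y l ^ u l) * y i ^ a := by
  have hsingle : ∏ l, y l ^ (Pi.single i a : ι → ℕ) l = y i ^ a := by
    rw [Fintype.prod_eq_single i fun l hl => by rw [Pi.single_eq_of_ne hl, pow_zero],
      Pi.single_eq_same]
  simp only [Pi.add_apply, pow_add, Finset.prod_mul_distrib, hsingle]

variable [LinearOrder R] [IsStrictOrderedRing R] [ExistsAddOfLE R]

lemma pow_mul_pow_add_pow_mul_pow_le {y z : R} (hy : 0 ≤ y) (hz : 0 ≤ z) (a b : ℕ) :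
    y ^ a * z ^ b + z ^ a * y ^ b ≤ y ^ (a + b) + z ^ (a + b) := by
  wlog hyz : y ≤ z generalizing y z
  · simpa only [add_comm] using this hz hy (le_of_not_ge hyz)
  rw [pow_add, pow_add]
  exact mul_add_mul_le_mul_add_mul (pow_le_pow_left₀ hy hyz a) (pow_le_pow_left₀ hy hyz b)

variable [DecidableEq ι] {x : ι → R}

lemma symmSum_add_symmSum_swap_le (hx : ∀ l, 0 ≤ x l) (u : ι → ℕ) (i j : ι) (a b : ℕ) :
    symmSum (u + Pi.single i a + Pi.single j b) x + symmSum (u + Pi.single j a + Pi.single i b) x ≤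
      symmSum (u + Pi.single i (a + b)) x + symmSum (u + Pi.single j (a + b)) x := by
  simp only [symmSum, ← Finset.sum_add_distrib]
  refine Finset.sum_le_sum fun π _ => ?_
  simp only [prod_pow_add_single _ _ _ fun l => x (π l), mul_assoc, ← mul_add]
  exact mul_le_mul_of_nonneg_left (pow_mul_pow_add_pow_mul_pow_le (hx _) (hx _) a b)
    (Finset.prod_nonneg fun l _ => pow_nonneg (hx _) _)

lemma symmSum_add_single_add_single_le (hx : ∀ l, 0 ≤ x l) {u : ι → ℕ} {i j : ι} (hu : u i = u j)
    (a b : ℕ) :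
    symmSum (u + Pi.single i a + Pi.single j b) x ≤ symmSum (u + Pi.single i (a + b)) x := by
  have huswap : u ∘ Equiv.swap i j = u := by
    rw [Equiv.comp_swap_eq_update, hu, Function.update_eq_self, ← hu, Function.update_eq_self]
  have hsplit : (u + Pi.single i a + Pi.single j b) ∘ Equiv.swap i j =
      u + Pi.single j a + Pi.single i b := by
    simp only [Pi.add_comp, huswap, single_comp_perm, Equiv.symm_swap, Equiv.swap_apply_left,
      Equiv.swap_apply_right]
  have hjoin : (u + Pi.single i (a + b)) ∘ Equiv.swap i j = u + Pi.single j (a + b) := by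
    rw [Pi.add_comp, huswap, single_comp_perm, Equiv.symm_swap, Equiv.swap_apply_left]
  have hadd := symmSum_add_symmSum_swap_le hx u i j a b
  rw [← hsplit, ← hjoin, symmSum_comp_perm, symmSum_comp_perm] at hadd
  exact le_of_not_gt fun hlt => hadd.not_gt (add_lt_add hlt hlt)

lemma UnitTransfer.symmSum_le {q r : ι → ℕ} (h : UnitTransfer q r) (hx : ∀ l, 0 ≤ x l) :
    symmSum r x ≤ symmSum q x := by
  obtain ⟨i, j, hlt, hr⟩ := h
  obtain ⟨a, ha⟩ := Nat.exists_eq_add_of_lt hlt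
  have hji : j ≠ i := ne_of_apply_ne q hlt.ne
  set u := Function.update q i (q j) with hu
  have hq : q = u + Pi.single i (a + 1) := by
    ext l
    grind [Pi.add_apply]
  have hsplit : r = u + Pi.single i a + Pi.single j 1 := by
    refine add_right_cancel (b := Pi.single i 1) ?_
    rw [hr, hq, Pi.single_add]
    abel
  rw [hq, hsplit]
  exact symmSum_add_single_add_single_le hx (by simp [hu, hji]) a 1

lemma symmSum_le_of_reflTransGen {p q : ι → ℕ} (h : Relation.ReflTransGen UnitTransfer q p)
    (hx : ∀ l, 0 ≤ x l) : symmSum p x ≤ symmSum q x := by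
  induction h with
  | refl => rfl
  | tail _ hstep ih => exact (hstep.symmSum_le hx).trans ih

end SymmSum

theorem Dominated.symmSum_le {ι R : Type*} [LinearOrder ι] [Fintype ι] [LocallyFiniteOrderBot ι]
    [CommSemiring R] [LinearOrder R] [IsStrictOrderedRing R] [ExistsAddOfLE R] {p q : ι → ℕ}
    (h : Dominated p q) (hp : Antitone p) {x : ι → R} (hx : ∀ l, 0 ≤ x l) :
    symmSum p x ≤ symmSum q x :=
  symmSum_le_of_reflTransGen (h.reflTransGen_unitTransfer hp) hx

lemma symmSum_sortDesc {m : ℕ} {R : Type*} [CommSemiring R] (p : Fin m → ℕ) (x : Fin m → R) :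
    symmSum (sortDesc p) x = symmSum p x :=
  symmSum_comp_perm p (Fin.revPerm.trans (Tuple.sort p)) x

theorem stmt15_general {m : ℕ} {R : Type*} [CommSemiring R] [LinearOrder R] [IsStrictOrderedRing R]
    [ExistsAddOfLE R] {p q : Fin m → ℕ} (hpq : Majorizes p q) {x : Fin m → R}
    (hx : ∀ i, 0 ≤ x i) : symmSum p x ≤ symmSum q x := by
  have hdom : Dominated (sortDesc p) (sortDesc q) := hpq
  simpa only [symmSum_sortDesc] using hdom.symmSum_le (antitone_sortDesc p) hx

/-- classical Muirhead inequality with integer exponents: if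
p ≺ q and x₁,…,x_m > 0, then W^p(x) ≤ W^q(x). -/
theorem stmt15 (m : ℕ) (p q : Fin m → ℕ) (hpq : Majorizes p q)
    (x : Fin m → ℝ) (hx : ∀ i, 0 < x i) :
    Wpoly p x ≤ Wpoly q x :=
  mul_le_mul_of_nonneg_left (stmt15_general hpq fun i => (hx i).le) (by positivity)
end

section
/- Let μ and ν be probability distributions on ℝ with finite first moments such that μ ≤_st ν or ν ≤_st μ. Let g: ℝ² → ℝ be a convex function satisfying g(x₁,x₂) + g(y₁,y₂) ≥ g(x₁,y₂) + g(y₁,x₂) for all x₁, x₂, y₁, y₂ ∈ ℝ with (y₁−x₁)(y₂−x₂) > 0, and assume all the expectations below exist. Then ∫ g d(μ⊗μ) + ∫ g d(ν⊗ν) ≥ ∫ g d(μ⊗ν) + ∫ g d(ν⊗μ); equivalently, for independent random variables X₁, X₂ ∼ μ and Y₁, Y₂ ∼ ν: E g(X₁,X₂) + E g(Y₁,Y₂) ≥ E g(X,Y) + E g(Y,X) where X ∼ μ and Y ∼ ν are independent. -/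
open MeasureTheory Set

/-!
For finite measures of equal mass `c`, the quantile functions on `(0, c)` equipped with Lebesgue
measure realize `μ ≤ₛₜ ν` as a coupling `X ≤ Y` almost surely. Two independent such couplings
`X₁ ≤ Y₁`, `X₂ ≤ Y₂` realize all four product measures at once, and the inequality between the
integrals is the expectation of the pointwise inequality
`g (X₁, Y₂) + g (Y₁, X₂) ≤ g (X₁, X₂) + g (Y₁, Y₂)`.
-/

open Filter Topology

section DistFun

variable (μ : Measure ℝ) [IsFiniteMeasure μ]

lemma monotone_distFun : Monotone (distFun μ) := fun _ _ hxy =>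
  measureReal_mono (Iic_subset_Iic.2 hxy)

lemma tendsto_distFun_atBot : Tendsto (distFun μ) atBot (𝓝 0) := by
  have h : Tendsto (fun x => μ (Iic x)) atBot (𝓝 0) := by
    have inter_eq : ⋂ x : ℝ, Iic x = ∅ :=
      iInter_Iic_eq_empty_iff.2 (range_id.symm ▸ not_bddBelow_univ)
    rw [← measure_empty (μ := μ), ← inter_eq]
    exact tendsto_measure_iInter_atBot (fun _ => nullMeasurableSet_Iic) monotone_Iic
      ⟨0, measure_ne_top μ _⟩
  exact (ENNReal.tendsto_toReal ENNReal.zero_ne_top).comp h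

lemma tendsto_distFun_atTop : Tendsto (distFun μ) atTop (𝓝 (μ.real univ)) :=
  (ENNReal.tendsto_toReal (measure_ne_top μ univ)).comp (tendsto_measure_Iic_atTop μ)

lemma tendsto_distFun_nhdsGT (x : ℝ) : Tendsto (distFun μ) (𝓝[>] x) (𝓝 (distFun μ x)) := by
  have h := tendsto_measure_biInter_gt (μ := μ) (s := Iic) (a := x)
    (fun _ _ => nullMeasurableSet_Iic) (fun _ _ _ hij => Iic_subset_Iic.2 hij)
    ⟨x + 1, lt_add_one x, measure_ne_top μ _⟩
  have inter_eq : ⋂ y > x, Iic y = Iic x := by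
    ext z
    simpa only [mem_iInter, mem_Iic] using forall_gt_imp_ge_iff_le_of_dense
  rw [inter_eq] at h
  exact (ENNReal.tendsto_toReal (measure_ne_top μ _)).comp h

end DistFun

/-- The quantile function (generalized inverse of the distribution function) of a finite measure
on `ℝ`, which represents the measure as a monotone image of Lebesgue measure on `(0, μ ℝ)`. At
levels `u` outside that interval the infimum may be taken over an empty or unbounded set and is
then `0`. -/
noncomputable def quantile (μ : Measure ℝ) (u : ℝ) : ℝ := sInf {x | u ≤ distFun μ x}

section Quantile

variable {μ : Measure ℝ} [IsFiniteMeasure μ]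

lemma quantile_le_iff {u : ℝ} (hu : u ∈ Ioo 0 (μ.real univ)) {x : ℝ} :
    quantile μ u ≤ x ↔ u ≤ distFun μ x := by
  have hbdd : BddBelow {x | u ≤ distFun μ x} := by
    obtain ⟨b, hb⟩ := ((tendsto_distFun_atBot μ).eventually_lt_const hu.1).exists
    exact ⟨b, fun y hy => ((monotone_distFun μ).reflect_lt (hb.trans_le hy)).le⟩
  have hne : {x | u ≤ distFun μ x}.Nonempty :=
    ((tendsto_distFun_atTop μ).eventually_const_le hu.2).exists
  refine ⟨fun h => ge_of_tendsto (tendsto_distFun_nhdsGT μ x) ?_, fun h => csInf_le hbdd h⟩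
  filter_upwards [self_mem_nhdsWithin] with y hy
  obtain ⟨z, hz, hzy⟩ := exists_lt_of_csInf_lt hne (h.trans_lt hy)
  exact hz.out.trans (monotone_distFun μ hzy.le)

lemma monotoneOn_quantile : MonotoneOn (quantile μ) (Ioo 0 (μ.real univ)) :=
  fun _ hu _ hv huv => (quantile_le_iff hu).2 (huv.trans ((quantile_le_iff hv).1 le_rfl))

variable (μ) in
lemma aemeasurable_quantile :
    AEMeasurable (quantile μ) (volume.restrict (Ioo 0 (μ.real univ))) :=
  aemeasurable_restrict_of_monotoneOn measurableSet_Ioo monotoneOn_quantile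

variable (μ) in
lemma map_quantile : (volume.restrict (Ioo 0 (μ.real univ))).map (quantile μ) = μ := by
  refine Measure.ext_of_Iic _ _ fun x => ?_
  have preimage_eq : quantile μ ⁻¹' Iic x ∩ Ioo 0 (μ.real univ) =
      Ioo 0 (μ.real univ) ∩ Iic (distFun μ x) := by
    rw [inter_comm]
    ext u
    exact and_congr_right fun hu => quantile_le_iff hu
  have distFun_le : distFun μ x ≤ μ.real univ := measureReal_mono (subset_univ _)
  calc (volume.restrict (Ioo 0 (μ.real univ))).map (quantile μ) (Iic x)
      = volume (Ioo 0 (μ.real univ) ∩ Iic (distFun μ x)) := by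
        rw [Measure.map_apply_of_aemeasurable (aemeasurable_quantile μ) measurableSet_Iic,
          Measure.restrict_apply' measurableSet_Ioo, preimage_eq]
    _ = volume (Ioc 0 (μ.real univ) ∩ Iic (distFun μ x)) :=
        measure_congr (ae_eq_set_inter Ioo_ae_eq_Ioc ae_eq_rfl)
    _ = ENNReal.ofReal (distFun μ x) := by
        rw [Ioc_inter_Iic, min_eq_right distFun_le, Real.volume_Ioc, sub_zero]
    _ = μ (Iic x) := ofReal_measureReal

end Quantile

namespace StochOrder

variable {μ ν : Measure ℝ} [IsFiniteMeasure μ] [IsFiniteMeasure ν]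

lemma quantile_le_quantile (h : StochOrder μ ν) {u : ℝ} (hu : u ∈ Ioo 0 (μ.real univ)) :
    quantile μ u ≤ quantile ν u := by
  have hu' : u ∈ Ioo 0 (ν.real univ) := by rwa [measureReal_def, ← h.1]
  exact (quantile_le_iff hu).2 (((quantile_le_iff hu').1 le_rfl).trans (h.2 _))

lemma exists_monotone_coupling (h : StochOrder μ ν) :
    ∃ π : Measure (ℝ × ℝ), IsFiniteMeasure π ∧ π.fst = μ ∧ π.snd = ν ∧ ∀ᵐ p ∂π, p.1 ≤ p.2 := by
  let P : Measure ℝ := volume.restrict (Ioo 0 (μ.real univ))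
  have hP : P = volume.restrict (Ioo 0 (ν.real univ)) := by simp only [P, measureReal_def, h.1]
  have hμ : AEMeasurable (quantile μ) P := aemeasurable_quantile μ
  have hν : AEMeasurable (quantile ν) P := hP ▸ aemeasurable_quantile ν
  refine ⟨P.map fun u => (quantile μ u, quantile ν u), inferInstance, ?_, ?_, ?_⟩
  · rw [Measure.fst_map_prodMk₀ hν, map_quantile]
  · rw [Measure.snd_map_prodMk₀ hμ, hP, map_quantile]
  · rw [ae_map_iff (hμ.prodMk hν) (measurableSet_le measurable_fst measurable_snd)]
    filter_upwards [ae_restrict_mem measurableSet_Ioo] with u hu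
    exact h.quantile_le_quantile hu

end StochOrder

lemma integral_comp_of_measurePreserving {α β E : Type*} [MeasurableSpace α] [MeasurableSpace β]
    [NormedAddCommGroup E] [NormedSpace ℝ E] {μ : Measure α} {ν : Measure β} {f : α → β}
    {g : β → E} (hf : MeasurePreserving f μ ν) (hg : AEStronglyMeasurable g ν) :
    ∫ x, g (f x) ∂μ = ∫ y, g y ∂ν := by
  rw [← hf.map_eq] at hg ⊢
  exact (integral_map hf.aemeasurable hg).symm

/-- Increasing differences (in the sense of Topkis) of a function of two ordered variables: the
increment in one variable is monotone in the other. This is the condition on `g` that makes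
comonotone pairs favourable, written without subtraction. -/
def HasIncreasingDifferences {α β : Type*} [Preorder α] [Preorder β] (g : α × β → ℝ) : Prop :=
  ∀ ⦃x₁ y₁ : α⦄, x₁ ≤ y₁ → ∀ ⦃x₂ y₂ : β⦄, x₂ ≤ y₂ →
    g (x₁, y₂) + g (y₁, x₂) ≤ g (x₁, x₂) + g (y₁, y₂)

namespace HasIncreasingDifferences

lemma of_lt {α β : Type*} [PartialOrder α] [PartialOrder β] {g : α × β → ℝ}
    (h : ∀ ⦃x₁ y₁ : α⦄, x₁ < y₁ → ∀ ⦃x₂ y₂ : β⦄, x₂ < y₂ →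
      g (x₁, y₂) + g (y₁, x₂) ≤ g (x₁, x₂) + g (y₁, y₂)) :
    HasIncreasingDifferences g := by
  intro x₁ y₁ hxy₁ x₂ y₂ hxy₂
  rcases hxy₁.eq_or_lt with rfl | hlt₁
  · rw [add_comm]
  rcases hxy₂.eq_or_lt with rfl | hlt₂
  · rfl
  exact h hlt₁ hlt₂

lemma of_mul_sub_pos {R : Type*} [Ring R] [PartialOrder R] [IsStrictOrderedRing R]
    {g : R × R → ℝ}
    (h : ∀ x₁ x₂ y₁ y₂ : R, 0 < (y₁ - x₁) * (y₂ - x₂) →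
      g (x₁, y₂) + g (y₁, x₂) ≤ g (x₁, x₂) + g (y₁, y₂)) :
    HasIncreasingDifferences g :=
  of_lt fun _ _ hxy₁ _ _ hxy₂ => h _ _ _ _ (mul_pos (sub_pos.2 hxy₁) (sub_pos.2 hxy₂))

lemma integral_prod_marginals_le {α β : Type*} [Preorder α] [Preorder β]
    [MeasurableSpace α] [MeasurableSpace β] {g : α × β → ℝ} (hg : HasIncreasingDifferences g)
    {π₁ : Measure (α × α)} {π₂ : Measure (β × β)} [SFinite π₁] [SFinite π₂]
    (hπ₁ : ∀ᵐ p ∂π₁, p.1 ≤ p.2) (hπ₂ : ∀ᵐ p ∂π₂, p.1 ≤ p.2)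
    (hff : Integrable g (π₁.fst.prod π₂.fst)) (hss : Integrable g (π₁.snd.prod π₂.snd))
    (hfs : Integrable g (π₁.fst.prod π₂.snd)) (hsf : Integrable g (π₁.snd.prod π₂.fst)) :
    (∫ p, g p ∂(π₁.fst.prod π₂.snd)) + (∫ p, g p ∂(π₁.snd.prod π₂.fst)) ≤
      (∫ p, g p ∂(π₁.fst.prod π₂.fst)) + ∫ p, g p ∂(π₁.snd.prod π₂.snd) := by
  have fst₁ : MeasurePreserving Prod.fst π₁ π₁.fst := ⟨measurable_fst, rfl⟩
  have snd₁ : MeasurePreserving Prod.snd π₁ π₁.snd := ⟨measurable_snd, rfl⟩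
  have fst₂ : MeasurePreserving Prod.fst π₂ π₂.fst := ⟨measurable_fst, rfl⟩
  have snd₂ : MeasurePreserving Prod.snd π₂ π₂.snd := ⟨measurable_snd, rfl⟩
  have int_ff := (fst₁.prod fst₂).integrable_comp_of_integrable hff
  have int_ss := (snd₁.prod snd₂).integrable_comp_of_integrable hss
  have int_fs := (fst₁.prod snd₂).integrable_comp_of_integrable hfs
  have int_sf := (snd₁.prod fst₂).integrable_comp_of_integrable hsf
  have pointwise : ∀ᵐ p ∂(π₁.prod π₂),
      g (p.1.1, p.2.2) + g (p.1.2, p.2.1) ≤ g (p.1.1, p.2.1) + g (p.1.2, p.2.2) := by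
    filter_upwards [Measure.quasiMeasurePreserving_fst.ae hπ₁,
      Measure.quasiMeasurePreserving_snd.ae hπ₂] with p hp₁ hp₂
    exact hg hp₁ hp₂
  calc (∫ p, g p ∂(π₁.fst.prod π₂.snd)) + (∫ p, g p ∂(π₁.snd.prod π₂.fst))
      = ∫ p, (g (p.1.1, p.2.2) + g (p.1.2, p.2.1)) ∂(π₁.prod π₂) := by
        rw [← integral_comp_of_measurePreserving (fst₁.prod snd₂) hfs.1,
          ← integral_comp_of_measurePreserving (snd₁.prod fst₂) hsf.1]
        exact (integral_add int_fs int_sf).symm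
    _ ≤ ∫ p, (g (p.1.1, p.2.1) + g (p.1.2, p.2.2)) ∂(π₁.prod π₂) :=
        integral_mono_ae (int_fs.add int_sf) (int_ff.add int_ss) pointwise
    _ = (∫ p, g p ∂(π₁.fst.prod π₂.fst)) + ∫ p, g p ∂(π₁.snd.prod π₂.snd) := by
        rw [← integral_comp_of_measurePreserving (fst₁.prod fst₂) hff.1,
          ← integral_comp_of_measurePreserving (snd₁.prod snd₂) hss.1]
        exact integral_add int_ff int_ss

end HasIncreasingDifferences

theorem stmt18_general {μ₁ ν₁ μ₂ ν₂ : Measure ℝ} [IsFiniteMeasure μ₁] [IsFiniteMeasure ν₁]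
    [IsFiniteMeasure μ₂] [IsFiniteMeasure ν₂] (h₁ : StochOrder μ₁ ν₁) (h₂ : StochOrder μ₂ ν₂)
    {g : ℝ × ℝ → ℝ} (hg : HasIncreasingDifferences g)
    (hμμ : Integrable g (μ₁.prod μ₂)) (hνν : Integrable g (ν₁.prod ν₂))
    (hμν : Integrable g (μ₁.prod ν₂)) (hνμ : Integrable g (ν₁.prod μ₂)) :
    (∫ p, g p ∂(μ₁.prod ν₂)) + (∫ p, g p ∂(ν₁.prod μ₂)) ≤
      (∫ p, g p ∂(μ₁.prod μ₂)) + ∫ p, g p ∂(ν₁.prod ν₂) := by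
  obtain ⟨π₁, _, rfl, rfl, hπ₁⟩ := h₁.exists_monotone_coupling
  obtain ⟨π₂, _, rfl, rfl, hπ₂⟩ := h₂.exists_monotone_coupling
  exact hg.integral_prod_marginals_le hπ₁ hπ₂ hμμ hνν hμν hνμ

/-- Theorem 4.5: for stochastically comparable probability
distributions μ, ν and a convex function g satisfying the supermodularity-type
condition, one has ∫g d(μ⊗ν) + ∫g d(ν⊗μ) ≤ ∫g d(μ⊗μ) + ∫g d(ν⊗ν). -/
theorem stmt18 (μ ν : Measure ℝ) [IsProbabilityMeasure μ] [IsProbabilityMeasure ν]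
    (hμ1 : Integrable (fun x : ℝ => |x|) μ) (hν1 : Integrable (fun x : ℝ => |x|) ν)
    (hst : StochOrder μ ν ∨ StochOrder ν μ)
    (g : ℝ × ℝ → ℝ) (hg : ConvexOn ℝ Set.univ g)
    (hsm : ∀ x₁ x₂ y₁ y₂ : ℝ, 0 < (y₁ - x₁) * (y₂ - x₂) →
      g (x₁, y₂) + g (y₁, x₂) ≤ g (x₁, x₂) + g (y₁, y₂))
    (h1 : Integrable g (μ.prod μ)) (h2 : Integrable g (ν.prod ν))
    (h3 : Integrable g (μ.prod ν)) (h4 : Integrable g (ν.prod μ)) :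
    (∫ p, g p ∂(μ.prod ν)) + (∫ p, g p ∂(ν.prod μ)) ≤
      (∫ p, g p ∂(μ.prod μ)) + ∫ p, g p ∂(ν.prod ν) := by
  rcases hst with h | h
  · exact stmt18_general h h (.of_mul_sub_pos hsm) h1 h2 h3 h4
  · linarith only [stmt18_general h h (.of_mul_sub_pos hsm) h2 h1 h4 h3]
end

section
/- Let n ∈ ℕ, let a_{n,k}(x) = C(n+k, k)·(1−x)^{n+1}·x^k for x ∈ [0,1), and let x, y ∈ [0,1) with x ≠ y. Then Σ_{i=0}^∞ Σ_{j=0}^∞ ( a_{n,i}(x) a_{n,j}(x) + a_{n,i}(y) a_{n,j}(y) − 2 a_{n,i}(x) a_{n,j}(y) ) · (i+j)/(2n+i+j) < 0. In particular, the Gavrea inequality Σ_{i,j} ( a_{n,i}(x) a_{n,j}(x) + a_{n,i}(y) a_{n,j}(y) − 2 a_{n,i}(x) a_{n,j}(y) ) φ((i+j)/(2n+i+j)) ≥ 0 fails for the convex function φ(u) = u. -/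
open MeasureTheory Set

/-- The negative binomial weights a_{n,k}(x) = C(n+k,k)(1−x)^{n+1}x^k. -/
noncomputable def negbin (n k : ℕ) (x : ℝ) : ℝ :=
  ((n + k).choose k : ℝ) * (1 - x) ^ (n + 1) * x ^ k

/-!
For a symmetric kernel `k`, the series `∑ (a i * a j + b i * b j - 2 * a i * b j) * k (i, j)` is the
quadratic form of `k` at `d = a - b`. When `a` and `b` have the same total mass, replacing `k` by
`1 - k` only changes the sign. For `n > 0`, here `1 - k (i, j) = c / (c + i + j)` with `c = 2 * n`.
Since `1 / (c + i + j) = ∫ t in 0..1, t ^ (c - 1) * t ^ (i + j)`, the quadratic form of the Cauchy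
kernel `1 / (c + i + j)` is `∫ t in 0..1, t ^ (c - 1) * D t ^ 2`, where `D` is the generating
function of `d`; it is positive because the zeros of a nonzero power series do not accumulate at
`0`. For `n = 0`, `1 - k` is the indicator of `(0, 0)`, with quadratic form `d 0 ^ 2`.
-/

theorem hasSum_mul_prod {ι κ : Type*} {a : ι → ℝ} {b : κ → ℝ} {s t : ℝ}
    (ha : HasSum a s) (hb : HasSum b t) : HasSum (fun p : ι × κ ↦ a p.1 * b p.2) (s * t) :=
  ha.mul hb (summable_mul_of_summable_norm ha.summable.norm hb.summable.norm)

theorem summable_mul_mul_of_abs_le {ι κ : Type*} {a : ι → ℝ} {b : κ → ℝ} {k : ι × κ → ℝ} {C : ℝ}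
    (ha : Summable a) (hb : Summable b) (hk : ∀ p, |k p| ≤ C) :
    Summable fun p : ι × κ ↦ a p.1 * b p.2 * k p := by
  refine Summable.of_norm_bounded
    ((hasSum_mul_prod ha.hasSum hb.hasSum).summable.norm.mul_right C) fun p ↦ ?_
  rw [norm_mul]
  exact mul_le_mul_of_nonneg_left (hk p) (norm_nonneg _)

theorem tsum_tsum_mul_symm_kernel {ι : Type*} {a b : ι → ℝ} {k : ι × ι → ℝ} {C : ℝ}
    (ha : Summable a) (hb : Summable b) (hk : ∀ p, |k p| ≤ C) (hsymm : ∀ p, k p.swap = k p) :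
    ∑' i, ∑' j, (a i * a j + b i * b j - 2 * a i * b j) * k (i, j) =
      ∑' p : ι × ι, (a p.1 - b p.1) * (a p.2 - b p.2) * k p := by
  have haa := summable_mul_mul_of_abs_le ha ha hk
  have hab := summable_mul_mul_of_abs_le ha hb hk
  have hba := summable_mul_mul_of_abs_le hb ha hk
  have hbb := summable_mul_mul_of_abs_le hb hb hk
  have hswap : ∑' p : ι × ι, b p.1 * a p.2 * k p = ∑' p : ι × ι, a p.1 * b p.2 * k p := by
    rw [← (Equiv.prodComm ι ι).tsum_eq]
    refine tsum_congr fun p ↦ ?_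
    rw [Equiv.prodComm_apply, hsymm, Prod.fst_swap, Prod.snd_swap, mul_comm (b p.2)]
  have hleft := (haa.hasSum.add hbb.hasSum).sub (hab.hasSum.mul_left 2)
  have hright := ((haa.hasSum.add hbb.hasSum).sub hab.hasSum).sub hba.hasSum
  have hterm (p : ι × ι) : (a p.1 * a p.2 + b p.1 * b p.2 - 2 * a p.1 * b p.2) * k p =
      a p.1 * a p.2 * k p + b p.1 * b p.2 * k p - 2 * (a p.1 * b p.2 * k p) := by ring
  calc ∑' i, ∑' j, (a i * a j + b i * b j - 2 * a i * b j) * k (i, j)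
      = ∑' p : ι × ι, (a p.1 * a p.2 + b p.1 * b p.2 - 2 * a p.1 * b p.2) * k p :=
        (hleft.summable.congr fun p ↦ (hterm p).symm).tsum_prod.symm
    _ = _ := by rw [tsum_congr hterm, hleft.tsum_eq]
    _ = _ := by rw [hswap]; ring
    _ = ∑' p : ι × ι, (a p.1 - b p.1) * (a p.2 - b p.2) * k p :=
        (hright.congr_fun fun p ↦ by ring).tsum_eq.symm

section PowerSeries

variable {d : ℕ → ℝ}

theorem norm_mul_pow_le_norm (r : ℝ) {t : ℝ} (ht : |t| ≤ 1) (k : ℕ) : ‖r * t ^ k‖ ≤ ‖r‖ := by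
  rw [norm_mul, norm_pow]
  exact mul_le_of_le_one_right (norm_nonneg r) (pow_le_one₀ (norm_nonneg t) ht)

theorem summable_mul_pow (hd : Summable d) {t : ℝ} (ht : |t| ≤ 1) : Summable fun k ↦ d k * t ^ k :=
  Summable.of_norm_bounded hd.norm fun k ↦ norm_mul_pow_le_norm (d k) ht k

theorem continuousOn_tsum_mul_pow (hd : Summable d) :
    ContinuousOn (fun t : ℝ ↦ ∑' i, d i * t ^ i) (Icc (-1) 1) :=
  continuousOn_tsum (fun i ↦ by fun_prop) hd.norm fun i _ ht ↦
    norm_mul_pow_le_norm (d i) (abs_le.2 ht) i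

open Topology FormalMultilinearSeries in
theorem eventually_tsum_mul_pow_ne_zero (hd : Summable d) (hd₀ : d ≠ 0) :
    ∀ᶠ t in 𝓝[≠] (0 : ℝ), ∑' i, d i * t ^ i ≠ 0 := by
  have hradius : 0 < (ofScalars ℝ d).radius := by
    refine lt_of_lt_of_le (by simp) ((ofScalars ℝ d).le_radius_of_summable_norm (r := 1) ?_)
    simpa [ofScalars_norm] using hd.norm
  have hseries := ((ofScalars ℝ d).hasFPowerSeriesOnBall hradius).hasFPowerSeriesAt
  filter_upwards [hseries.locally_ne_zero (by simpa using hd₀)] with t ht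
  simpa [FormalMultilinearSeries.sum, ofScalars_apply_eq, mul_comm] using ht

end PowerSeries

section CauchyKernel

variable {c : ℝ} {a b d : ℕ → ℝ}

theorem integral_rpow_mul_pow {m : ℕ} (hcm : 0 < c + m) :
    ∫ t in (0 : ℝ)..1, t ^ (c - 1) * t ^ m = 1 / (c + m) := by
  have hcongr : ∫ t in (0 : ℝ)..1, t ^ (c - 1) * t ^ m = ∫ t in (0 : ℝ)..1, t ^ (c - 1 + m) :=
    intervalIntegral.integral_congr_uIoo fun t ht ↦ by
      rw [uIoo_of_le zero_le_one] at ht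
      exact (Real.rpow_add_natCast ht.1.ne' _ _).symm
  rw [hcongr, integral_rpow (Or.inl (by linarith)), Real.one_rpow, Real.zero_rpow (by linarith)]
  ring

theorem hasSum_mul_div_add_add (hc : 0 < c) (ha : Summable a) (hb : Summable b) :
    HasSum (fun p : ℕ × ℕ ↦ a p.1 * b p.2 / (c + p.1 + p.2))
      (∫ t in (0 : ℝ)..1, t ^ (c - 1) * ((∑' i, a i * t ^ i) * ∑' j, b j * t ^ j)) := by
  have hterm (p : ℕ × ℕ) : ∫ t in (0 : ℝ)..1,
      t ^ (c - 1) * ((a p.1 * t ^ p.1) * (b p.2 * t ^ p.2)) =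
        a p.1 * b p.2 / (c + p.1 + p.2) := by
    have h := integral_rpow_mul_pow (c := c) (m := p.1 + p.2) (by positivity)
    push_cast at h
    rw [div_eq_mul_one_div, add_assoc c, ← h, ← intervalIntegral.integral_const_mul]
    congr with t
    ring
  have hpow : IntervalIntegrable (fun t : ℝ ↦ t ^ (c - 1)) volume 0 1 :=
    intervalIntegral.intervalIntegrable_rpow' (by linarith)
  have hnonneg {t : ℝ} (ht : t ∈ uIoc 0 1) : 0 ≤ t :=
    (uIoc_of_le (zero_le_one' ℝ) ▸ ht).1.le
  have habs {t : ℝ} (ht : t ∈ uIoc 0 1) : |t| ≤ 1 :=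
    (abs_of_nonneg (hnonneg ht)).trans_le (uIoc_of_le (zero_le_one' ℝ) ▸ ht).2
  simp only [← hterm]
  refine intervalIntegral.hasSum_integral_of_dominated_convergence
    (fun p t ↦ t ^ (c - 1) * (‖a p.1‖ * ‖b p.2‖)) (fun p ↦ ?_) (fun p ↦ ?_) ?_ ?_ ?_
  · exact Measurable.aestronglyMeasurable (by fun_prop)
  · refine .of_forall fun t ht ↦ ?_
    rw [norm_mul, norm_mul (a p.1 * _), Real.norm_of_nonneg (Real.rpow_nonneg (hnonneg ht) _)]
    gcongr
    · exact Real.rpow_nonneg (hnonneg ht) _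
    · exact norm_mul_pow_le_norm _ (habs ht) _
    · exact norm_mul_pow_le_norm _ (habs ht) _
  · refine .of_forall fun t _ ↦ Summable.mul_left _ ?_
    exact (hasSum_mul_prod ha.norm.hasSum hb.norm.hasSum).summable
  · simp only [tsum_mul_left]
    exact hpow.mul_const _
  · refine .of_forall fun t ht ↦ HasSum.mul_left _ ?_
    exact hasSum_mul_prod (summable_mul_pow ha (habs ht)).hasSum
      (summable_mul_pow hb (habs ht)).hasSum

theorem tsum_mul_div_add_add_pos (hc : 0 < c) (hd : Summable d) (hd₀ : d ≠ 0) :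
    0 < ∑' p : ℕ × ℕ, d p.1 * d p.2 / (c + p.1 + p.2) := by
  rw [(hasSum_mul_div_add_add hc hd hd).tsum_eq]
  have hcont : ContinuousOn (fun t : ℝ ↦ ∑' i, d i * t ^ i) (uIcc 0 1) := by
    rw [uIcc_of_le zero_le_one]
    exact (continuousOn_tsum_mul_pow hd).mono (Icc_subset_Icc_left (by norm_num))
  have hint := (intervalIntegral.intervalIntegrable_rpow' (by linarith : -1 < c - 1)
    (a := 0) (b := 1)).mul_continuousOn (hcont.mul hcont)
  obtain ⟨ε, hε, hne⟩ : ∃ ε > 0, Ioo 0 ε ⊆ {t : ℝ | ∑' i, d i * t ^ i ≠ 0} :=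
    mem_nhdsGT_iff_exists_Ioo_subset.1
      (nhdsWithin_mono _ (fun _ ht ↦ ne_of_gt ht) (eventually_tsum_mul_pow_ne_zero hd hd₀))
  refine (intervalIntegral.integral_pos_iff_support_of_nonneg_ae' ?_ hint).2 ⟨zero_lt_one, ?_⟩
  · refine (ae_restrict_mem measurableSet_uIoc).mono fun t ht ↦ ?_
    rw [uIoc_of_le zero_le_one] at ht
    exact mul_nonneg (Real.rpow_nonneg ht.1.le _) (mul_self_nonneg _)
  · have hsupport : Ioo 0 (min ε 1) ⊆ Function.support
        (fun t : ℝ ↦ t ^ (c - 1) * ((∑' i, d i * t ^ i) * ∑' j, d j * t ^ j)) ∩ Ioc 0 1 := by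
      intro t ht
      have hD : ∑' i, d i * t ^ i ≠ 0 := hne ⟨ht.1, ht.2.trans_le (min_le_left _ _)⟩
      exact ⟨mul_ne_zero (Real.rpow_pos_of_pos ht.1 _).ne' (mul_ne_zero hD hD),
        ht.1, ht.2.le.trans (min_le_right _ _)⟩
    refine lt_of_lt_of_le ?_ (measure_mono hsupport)
    simp [hε]

theorem tsum_mul_mul_add_div_add_add_neg (hc : 0 < c) (hd : HasSum d 0) (hd₀ : d ≠ 0) :
    ∑' p : ℕ × ℕ, d p.1 * d p.2 * ((p.1 + p.2) / (c + p.1 + p.2)) < 0 := by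
  have hsq : HasSum (fun p : ℕ × ℕ ↦ d p.1 * d p.2) 0 := by
    simpa using hasSum_mul_prod hd hd
  have hcauchy := (hasSum_mul_div_add_add hc hd.summable hd.summable).summable
  have hsplit (p : ℕ × ℕ) : d p.1 * d p.2 * ((p.1 + p.2) / (c + p.1 + p.2)) =
      d p.1 * d p.2 - c * (d p.1 * d p.2 / (c + p.1 + p.2)) := by
    have hp : c + p.1 + p.2 ≠ 0 := by positivity
    field_simp
    ring
  rw [tsum_congr hsplit, (hsq.sub (hcauchy.hasSum.mul_left c)).tsum_eq, zero_sub, neg_lt_zero]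
  exact mul_pos hc (tsum_mul_div_add_add_pos hc hd.summable hd₀)

-- The term at `(0, 0)` carries the weight `0 / 0 = 0`, all others the weight `1`.
theorem tsum_mul_mul_add_div_add (hd : HasSum d 0) :
    ∑' p : ℕ × ℕ, d p.1 * d p.2 * (((p.1 : ℝ) + p.2) / (p.1 + p.2)) = -d 0 ^ 2 := by
  have hsq : HasSum (fun p : ℕ × ℕ ↦ d p.1 * d p.2) 0 := by
    simpa using hasSum_mul_prod hd hd
  have hsplit (p : ℕ × ℕ) : d p.1 * d p.2 * (((p.1 : ℝ) + p.2) / (p.1 + p.2)) =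
      d p.1 * d p.2 - if p = (0, 0) then d 0 ^ 2 else 0 := by
    split_ifs with hp
    · simp [hp, sq]
    · have hne : (p.1 : ℝ) + p.2 ≠ 0 := by
        contrapose! hp
        norm_cast at hp
        exact Prod.ext (Nat.add_eq_zero_iff.1 hp).1 (Nat.add_eq_zero_iff.1 hp).2
      rw [div_self hne, mul_one, sub_zero]
  rw [tsum_congr hsplit, (hsq.sub (hasSum_ite_eq (0, 0) (d 0 ^ 2))).tsum_eq, zero_sub]

end CauchyKernel

theorem negbin_zero_injOn (n : ℕ) : InjOn (negbin n 0) (Iic 1) := by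
  intro x hx y hy hxy
  simp only [negbin, Nat.choose_zero_right, Nat.cast_one, one_mul, pow_zero, mul_one] at hxy
  have h := (pow_left_inj₀ (sub_nonneg.2 hx) (sub_nonneg.2 hy) n.succ_ne_zero).1 hxy
  exact sub_right_injective h

theorem hasSum_negbin (n : ℕ) {x : ℝ} (hx : |x| < 1) : HasSum (fun k ↦ negbin n k x) 1 := by
  have hx₁ : (1 - x) ^ (n + 1) ≠ 0 := pow_ne_zero _ (sub_pos.2 (abs_lt.1 hx).2).ne'
  have h := (hasSum_choose_mul_geometric_of_norm_lt_one n hx).mul_left ((1 - x) ^ (n + 1))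
  rw [mul_one_div_cancel hx₁] at h
  refine h.congr_fun fun k ↦ ?_
  rw [negbin, add_comm n k, Nat.choose_symm_add]
  ring

theorem stmt19_general (n : ℕ) {x y : ℝ} (hx : |x| < 1) (hy : |y| < 1) (hxy : x ≠ y) :
    ∑' i : ℕ, ∑' j : ℕ,
      (negbin n i x * negbin n j x + negbin n i y * negbin n j y -
          2 * negbin n i x * negbin n j y) *
        (((i : ℝ) + j) / (2 * n + i + j)) < 0 := by
  have hsx := hasSum_negbin n hx
  have hsy := hasSum_negbin n hy
  have hd : HasSum (fun k ↦ negbin n k x - negbin n k y) 0 := by simpa using hsx.sub hsy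
  have hd₀ : negbin n 0 x - negbin n 0 y ≠ 0 :=
    sub_ne_zero.2 ((negbin_zero_injOn n).ne (abs_lt.1 hx).2.le (abs_lt.1 hy).2.le hxy)
  let k (p : ℕ × ℕ) : ℝ := (p.1 + p.2) / (2 * n + p.1 + p.2)
  have hk (p : ℕ × ℕ) : |k p| ≤ 1 := by
    rw [abs_of_nonneg (by positivity)]
    exact div_le_one_of_le₀ (by linarith [n.cast_nonneg (α := ℝ)]) (by positivity)
  have hsymm (p : ℕ × ℕ) : k p.swap = k p := by
    simp only [k, Prod.fst_swap, Prod.snd_swap, add_comm, add_left_comm]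
  rw [tsum_tsum_mul_symm_kernel (k := k) hsx.summable hsy.summable hk hsymm]
  obtain rfl | hn := n.eq_zero_or_pos
  · simpa [k] using (tsum_mul_mul_add_div_add hd).trans_lt (neg_lt_zero.2 (sq_pos_of_ne_zero hd₀))
  · exact tsum_mul_mul_add_div_add_add_neg (by positivity) hd fun h ↦ hd₀ (congrFun h 0)

/-- the Gavrea inequality fails for φ(u) = u: for x ≠ y in [0,1)
the corresponding double series is strictly negative. -/
theorem stmt19 (n : ℕ) (x y : ℝ) (hx : x ∈ Set.Ico (0 : ℝ) 1)
    (hy : y ∈ Set.Ico (0 : ℝ) 1) (hxy : x ≠ y) :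
    ∑' i : ℕ, ∑' j : ℕ,
      (negbin n i x * negbin n j x + negbin n i y * negbin n j y -
          2 * negbin n i x * negbin n j y) *
        (((i : ℝ) + j) / (2 * n + i + j)) < 0 :=
  stmt19_general n (abs_lt.2 ⟨by linarith [hx.1], hx.2⟩) (abs_lt.2 ⟨by linarith [hy.1], hy.2⟩) hxy
end
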